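/- arXiv:2403.15998 — 2 statements merged into one kernel-verified Lean document; each statement's English description precedes it below -/
import Mathlib

section
/- Consider the 4×4 linear hyperbolic plant with the full-state feedback control law U(t) = Σ_{i=1}^3 ∫_0^L k_i(L,ξ) u_i(t,ξ) dξ + ∫_0^L k_4(L,ξ) w(t,ξ) dξ − ρ_1 u_1(t,L) − ρ_2 u_2(t,L). Then there exist constants M > 0 and λ > 0, depending only on L, γ_1, γ_2, γ_3, μ, the σ_{ij}, the functions α_i, θ_i, the δ_i, ρ_1, ρ_2 and the kernels k_1, …, k_4, such that every classical solution (u_1, u_2, u_3, w) of the closed-loop system satisfies Σ_{i=1}^3 ‖u_i(t,·)‖² + ‖w(t,·)‖² ≤ M e^{−λ t} ( Σ_{i=1}^3 ‖u_i(0,·)‖² + ‖w(0,·)‖² ) for all t ≥ 0; that is, the closed loop is exponentially stable in the L² sense. -/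
/-!
Exponential stability follows from a backstepping transformation and a weighted Lyapunov functional.

Put `β(t,x) = w(t,x) - ∫₀ˣ (∑ᵢ kᵢ(x,ξ) uᵢ(t,ξ) + k₄(x,ξ) w(t,ξ)) dξ`. The kernel equations are
exactly what makes `β` solve the pure transport equation `∂ₜβ = μ ∂ₓβ` (`backstep_transport`), and
the control law says `β(t,L) = 0`, while `β(t,0) = w(t,0)`.

Write `E`, `W`, `B` for the energies of `u`, `w`, `β` with weight `exp (-ν x)`. In such a norm a
Volterra operator has squared norm `O(1/ν)` (`integral_exp_mul_volterra_sq_le`). So for large `ν`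
the Volterra integral is a small perturbation, and `W ≤ 3 B + E / 2` and `B ≤ 3 (E + W)` without
constructing the inverse transformation.

The energy identity for transport (`HasPartials.hasDerivAt_energy`) gives, with `B'` the energy of
`β` with weight `exp x`, an inequality `dE/dt ≤ D β(t,0)² - m ν E + 3 C₁ (E + W)` and the identity
`dB'/dt = -μ β(t,0)² - μ B'`. Taking `ν` large and then `A` large makes `V = E + A B'` satisfy
`dV/dt ≤ -λ V`. All constants come from bounds on the coefficients and kernels, and `V` is
equivalent to the unweighted `L²` energy.
-/

open Set intervalIntegral Function

/-! ### Functions of two variables with continuous partial derivatives -/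

/-- `f` is continuous on the plane, with continuous partial derivatives `f₁` in the first and `f₂`
in the second variable. -/
structure HasPartials (f f₁ f₂ : ℝ → ℝ → ℝ) : Prop where
  cont : Continuous (uncurry f)
  cont₁ : Continuous (uncurry f₁)
  cont₂ : Continuous (uncurry f₂)
  deriv₁ : ∀ t x, HasDerivAt (fun τ => f τ x) (f₁ t x) t
  deriv₂ : ∀ t x, HasDerivAt (fun y => f t y) (f₂ t x) x

theorem ContDiff.exists_hasPartials {f : ℝ → ℝ → ℝ} (hf : ContDiff ℝ 1 (uncurry f)) :
    ∃ f₁ f₂, HasPartials f f₁ f₂ := by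
  have hd : Differentiable ℝ (uncurry f) := hf.differentiable one_ne_zero
  have hc : Continuous (fderiv ℝ (uncurry f)) := hf.continuous_fderiv one_ne_zero
  refine ⟨fun t x => fderiv ℝ (uncurry f) (t, x) (1, 0),
    fun t x => fderiv ℝ (uncurry f) (t, x) (0, 1), hf.continuous, ?_, ?_, ?_, ?_⟩
  · exact hc.clm_apply continuous_const
  · exact hc.clm_apply continuous_const
  · intro t x
    have h := (hd (t, x)).hasFDerivAt.comp_hasDerivAt t
      ((hasDerivAt_id t).prodMk (hasDerivAt_const t x))
    exact h
  · intro t x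
    have h := (hd (t, x)).hasFDerivAt.comp_hasDerivAt x
      ((hasDerivAt_const x t).prodMk (hasDerivAt_id x))
    exact h

theorem hasDerivAt_integral_param {F F' : ℝ → ℝ → ℝ} (hF : Continuous (uncurry F))
    (hF' : Continuous (uncurry F')) (hd : ∀ t x, HasDerivAt (fun τ => F τ x) (F' t x) t)
    (a b t : ℝ) :
    HasDerivAt (fun τ => ∫ x in a..b, F τ x) (∫ x in a..b, F' t x) t := by
  obtain ⟨C, hC⟩ := ((isCompact_Icc (a := t - 1) (b := t + 1)).prod
    (isCompact_uIcc (a := a) (b := b))).exists_bound_of_continuousOn hF'.continuousOn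
  refine (intervalIntegral.hasDerivAt_integral_of_dominated_loc_of_deriv_le (bound := fun _ => C)
    (Icc_mem_nhds (by linarith : t - 1 < t) (by linarith : t < t + 1)) ?_ ?_ ?_ ?_ ?_ ?_).2
  · exact Filter.Eventually.of_forall fun τ =>
      (hF.comp (Continuous.prodMk_right τ)).aestronglyMeasurable
  · exact (hF.comp (Continuous.prodMk_right t)).intervalIntegrable _ _
  · exact (hF'.comp (Continuous.prodMk_right t)).aestronglyMeasurable
  · exact Filter.Eventually.of_forall fun x hx τ hτ => hC (τ, x) ⟨hτ, uIoc_subset_uIcc hx⟩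
  · exact intervalIntegrable_const
  · exact Filter.Eventually.of_forall fun x _ τ _ => hd τ x

/-- The Leibniz rule for an integral whose upper limit is the parameter: both partial derivatives of
`(y, z) ↦ ∫₀ᶻ h(y, ξ) dξ` are continuous, and the function is restricted to the diagonal. -/
theorem hasDerivAt_integral_leibniz {h h' : ℝ → ℝ → ℝ} (hc : Continuous (uncurry h))
    (hc' : Continuous (uncurry h')) (hd : ∀ y ξ, HasDerivAt (fun z => h z ξ) (h' y ξ) y)
    (x : ℝ) :
    HasDerivAt (fun y => ∫ ξ in (0:ℝ)..y, h y ξ) (h x x + ∫ ξ in (0:ℝ)..x, h' x ξ) x := by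
  have key := hasStrictFDerivAt_uncurry_coprod (𝕜 := ℝ) (u := (x, x))
    (f := fun y z => ∫ ξ in (0:ℝ)..z, h y ξ)
    (f₁ := fun y z => ContinuousLinearMap.toSpanSingleton ℝ (∫ ξ in (0:ℝ)..z, h' y ξ))
    (f₂ := fun y z => ContinuousLinearMap.toSpanSingleton ℝ (h y z))
    (Filter.Eventually.of_forall fun v =>
      (hasDerivAt_integral_param hc hc' hd 0 v.2 v.1).hasFDerivAt)
    (Filter.Eventually.of_forall fun v =>
      (integral_hasDerivAt_right
        ((hc.comp (Continuous.prodMk_right v.1)).intervalIntegrable _ _)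
        ((hc.comp (Continuous.prodMk_right v.1)).stronglyMeasurableAtFilter _ _)
        (hc.comp (Continuous.prodMk_right v.1)).continuousAt).hasFDerivAt)
    (by
      apply Continuous.continuousAt
      exact (ContinuousLinearMap.toSpanSingletonCLE (𝕜 := ℝ) (E := ℝ)).continuous.comp
        (continuous_parametric_primitive_of_continuous hc'))
    (by
      apply Continuous.continuousAt
      exact (ContinuousLinearMap.toSpanSingletonCLE (𝕜 := ℝ) (E := ℝ)).continuous.comp hc)
  have := key.hasFDerivAt.comp_hasDerivAt (f := fun y => (y, y)) x
    ((hasDerivAt_id x).prodMk (hasDerivAt_id x))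
  refine this.congr_deriv ?_
  simp [HasUncurry.uncurry, add_comm]

/-! ### Weighted energy estimates -/

/-- Energy identity for the transport operator `∂ₜ + c ∂ₓ` with weight `exp (a x)`: the boundary
terms and the damping `c a` come from integrating `c ∂ₓ` by parts. -/
theorem HasPartials.hasDerivAt_energy {f ft fx : ℝ → ℝ → ℝ} (hf : HasPartials f ft fx)
    (a c L t : ℝ) :
    HasDerivAt (fun τ => ∫ x in (0:ℝ)..L, Real.exp (a * x) * f τ x ^ 2)
      (c * (f t 0 ^ 2 - Real.exp (a * L) * f t L ^ 2)
        + c * a * (∫ x in (0:ℝ)..L, Real.exp (a * x) * f t x ^ 2)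
        + ∫ x in (0:ℝ)..L, Real.exp (a * x) * (2 * f t x * (ft t x + c * fx t x))) t := by
  have h0 := hf.cont
  have h1 := hf.cont₁
  have h2 := hf.cont₂
  have hD := hasDerivAt_integral_param
    (F := fun τ x => Real.exp (a * x) * f τ x ^ 2)
    (F' := fun τ x => Real.exp (a * x) * (2 * f τ x * ft τ x))
    (by unfold uncurry at *; fun_prop) (by unfold uncurry at *; fun_prop)
    (fun τ x => by
      have := ((hf.deriv₁ τ x).pow 2).const_mul (Real.exp (a * x))
      refine this.congr_deriv ?_
      push_cast; ring) 0 L t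
  refine hD.congr_deriv ?_
  have c0 : Continuous (f t) := h0.comp (Continuous.prodMk_right t)
  have c1 : Continuous (ft t) := h1.comp (Continuous.prodMk_right t)
  have c2 : Continuous (fx t) := h2.comp (Continuous.prodMk_right t)
  have hFTC : ∫ x in (0:ℝ)..L, (a * (Real.exp (a * x) * f t x ^ 2)
      + Real.exp (a * x) * (2 * f t x * fx t x))
      = Real.exp (a * L) * f t L ^ 2 - f t 0 ^ 2 := by
    rw [integral_eq_sub_of_hasDerivAt (f := fun x => Real.exp (a * x) * f t x ^ 2)]
    · simp
    · intro x _
      have he : HasDerivAt (fun y => Real.exp (a * y)) (Real.exp (a * x) * a) x := by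
        simpa using ((hasDerivAt_id x).const_mul a).exp
      refine (he.mul ((hf.deriv₂ t x).pow 2)).congr_deriv ?_
      simp only [Pi.pow_apply]
      push_cast; ring
    · exact Continuous.intervalIntegrable (by fun_prop) _ _
  have e1 : f t 0 ^ 2 - Real.exp (a * L) * f t L ^ 2 = - ∫ x in (0:ℝ)..L,
      (a * (Real.exp (a * x) * f t x ^ 2) + Real.exp (a * x) * (2 * f t x * fx t x)) := by
    rw [hFTC]; ring
  rw [e1, mul_neg, ← integral_const_mul, ← integral_const_mul, ← integral_neg,
    ← integral_add, ← integral_add]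
  · exact integral_congr fun x _ => by ring
  all_goals exact Continuous.intervalIntegrable (by fun_prop) _ _

/-- Cauchy–Schwarz against the constant function `1`. -/
theorem sq_integral_le {q : ℝ → ℝ} (hq : Continuous q) {x : ℝ} (hx : 0 ≤ x) :
    (∫ ξ in (0:ℝ)..x, q ξ) ^ 2 ≤ x * ∫ ξ in (0:ℝ)..x, q ξ ^ 2 := by
  rcases hx.eq_or_lt with rfl | hx
  · simp
  set I := ∫ ξ in (0:ℝ)..x, q ξ with hI
  -- Integrate the square of the deviation of `q` from its mean (scaled by `x`).
  have h : 0 ≤ ∫ ξ in (0:ℝ)..x, (x * q ξ - I) ^ 2 :=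
    integral_nonneg hx.le fun _ _ => sq_nonneg _
  have e : ∫ ξ in (0:ℝ)..x, (x * q ξ - I) ^ 2
      = x ^ 2 * (∫ ξ in (0:ℝ)..x, q ξ ^ 2) - 2 * x * I * I + x * I ^ 2 := by
    have : ∀ ξ, (x * q ξ - I) ^ 2 = x ^ 2 * q ξ ^ 2 - 2 * x * I * q ξ + I ^ 2 := fun ξ => by ring
    simp_rw [this]
    rw [integral_add, integral_sub, intervalIntegral.integral_const_mul,
      intervalIntegral.integral_const_mul, integral_const]
    · simp [← hI]
    all_goals exact Continuous.intervalIntegrable (by fun_prop) _ _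
  rw [e] at h
  have h2 : 0 ≤ x * (x * (∫ ξ in (0:ℝ)..x, q ξ ^ 2) - I ^ 2) := by linarith
  linarith [nonneg_of_mul_nonneg_right h2 hx]

/-- Taking primitives from `0` costs a factor `1 / ν` in `L¹` with weight `exp (-ν x)`: integrate
the derivative of `exp (-ν x) ∫₀ˣ φ`, which is nonnegative at `L`. -/
theorem integral_exp_mul_primitive_le {φ : ℝ → ℝ} (hφ : Continuous φ) (h0 : ∀ x, 0 ≤ φ x)
    {ν L : ℝ} (hL : 0 ≤ L) :
    ν * ∫ x in (0:ℝ)..L, Real.exp (-ν * x) * ∫ ξ in (0:ℝ)..x, φ ξ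
      ≤ ∫ x in (0:ℝ)..L, Real.exp (-ν * x) * φ x := by
  have hP : Continuous fun x => ∫ ξ in (0:ℝ)..x, φ ξ :=
    continuous_primitive (fun _ _ => hφ.intervalIntegrable _ _) 0
  have hFTC : ∫ x in (0:ℝ)..L, (Real.exp (-ν * x) * φ x
      - ν * (Real.exp (-ν * x) * ∫ ξ in (0:ℝ)..x, φ ξ))
      = Real.exp (-ν * L) * ∫ ξ in (0:ℝ)..L, φ ξ := by
    rw [integral_eq_sub_of_hasDerivAt
      (f := fun x => Real.exp (-ν * x) * ∫ ξ in (0:ℝ)..x, φ ξ)]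
    · simp
    · intro x _
      have he : HasDerivAt (fun y => Real.exp (-ν * y)) (Real.exp (-ν * x) * (-ν)) x := by
        simpa using ((hasDerivAt_id x).const_mul (-ν)).exp
      refine (he.mul (integral_hasDerivAt_right (hφ.intervalIntegrable _ _)
        (hφ.stronglyMeasurableAtFilter _ _) hφ.continuousAt)).congr_deriv ?_
      ring
    · exact Continuous.intervalIntegrable (by fun_prop) _ _
  rw [integral_sub, intervalIntegral.integral_const_mul] at hFTC
  · have : 0 ≤ Real.exp (-ν * L) * ∫ ξ in (0:ℝ)..L, φ ξ :=
      mul_nonneg (Real.exp_pos _).le (integral_nonneg hL fun x _ => h0 x)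
    linarith
  all_goals exact Continuous.intervalIntegrable (by fun_prop) _ _

/-- A Volterra integral is small in the norm with weight `exp (-ν x)` once `ν` is large. The factor
`1 / 6` is small enough to absorb the integral in both directions of the backstepping
transformation. -/
theorem integral_exp_mul_volterra_sq_le {Q : ℝ → ℝ → ℝ} (hQ : Continuous (uncurry Q))
    {s : ℝ → ℝ} (hs : Continuous s) (hs0 : ∀ x, 0 ≤ s x) {ν L C : ℝ} (hL : 0 < L)
    (hC : 0 ≤ C) (hQs : ∀ x ξ, 0 ≤ ξ → ξ ≤ x → x ≤ L → Q x ξ ^ 2 ≤ C * s ξ)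
    (hν6 : 6 * (L * C) ≤ ν) :
    6 * ∫ x in (0:ℝ)..L, Real.exp (-ν * x) * (∫ ξ in (0:ℝ)..x, Q x ξ) ^ 2
      ≤ ∫ x in (0:ℝ)..L, Real.exp (-ν * x) * s x := by
  have hP : Continuous fun x => ∫ ξ in (0:ℝ)..x, s ξ :=
    continuous_primitive (fun _ _ => hs.intervalIntegrable _ _) 0
  have hI : Continuous fun x => ∫ ξ in (0:ℝ)..x, Q x ξ :=
    continuous_parametric_intervalIntegral_of_continuous hQ continuous_id
  have h1 : ∫ x in (0:ℝ)..L, Real.exp (-ν * x) * (∫ ξ in (0:ℝ)..x, Q x ξ) ^ 2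
      ≤ ∫ x in (0:ℝ)..L, (L * C) * (Real.exp (-ν * x) * ∫ ξ in (0:ℝ)..x, s ξ) := by
    refine integral_mono_on hL.le (Continuous.intervalIntegrable (by fun_prop) _ _)
      (Continuous.intervalIntegrable (by fun_prop) _ _) fun x hx => ?_
    have cQ : Continuous (Q x) := hQ.comp (Continuous.prodMk_right x)
    have h2 := sq_integral_le cQ hx.1
    have h3 : ∫ ξ in (0:ℝ)..x, Q x ξ ^ 2 ≤ C * ∫ ξ in (0:ℝ)..x, s ξ := by
      rw [← intervalIntegral.integral_const_mul]
      refine integral_mono_on hx.1 (Continuous.intervalIntegrable (by fun_prop) _ _)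
        (Continuous.intervalIntegrable (by fun_prop) _ _) fun ξ hξ => hQs x ξ hξ.1 hξ.2 hx.2
    have h4 : 0 ≤ ∫ ξ in (0:ℝ)..x, s ξ := integral_nonneg hx.1 fun x _ => hs0 x
    have h5 : (∫ ξ in (0:ℝ)..x, Q x ξ) ^ 2 ≤ L * (C * ∫ ξ in (0:ℝ)..x, s ξ) :=
      h2.trans ((mul_le_mul_of_nonneg_left h3 hx.1).trans
        (mul_le_mul_of_nonneg_right hx.2 (mul_nonneg hC h4)))
    calc _ ≤ Real.exp (-ν * x) * (L * (C * ∫ ξ in (0:ℝ)..x, s ξ)) :=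
          mul_le_mul_of_nonneg_left h5 (Real.exp_pos _).le
      _ = _ := by ring
  rw [intervalIntegral.integral_const_mul] at h1
  have h6 := integral_exp_mul_primitive_le (ν := ν) hs hs0 hL.le
  have h7 : 0 ≤ ∫ x in (0:ℝ)..L, Real.exp (-ν * x) * ∫ ξ in (0:ℝ)..x, s ξ :=
    integral_nonneg hL.le fun x hx =>
      mul_nonneg (Real.exp_pos _).le (integral_nonneg hx.1 fun x _ => hs0 x)
  have := mul_le_mul_of_nonneg_right hν6 h7
  linarith

theorem le_exp_mul_of_deriv_le {V V' : ℝ → ℝ} {lam : ℝ} (hd : ∀ t, HasDerivAt V (V' t) t)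
    (hV : ∀ t, 0 ≤ t → V' t ≤ -lam * V t) {t : ℝ} (ht : 0 ≤ t) :
    V t ≤ Real.exp (-lam * t) * V 0 := by
  have hD : ∀ s, HasDerivAt (fun s => Real.exp (lam * s) * V s)
      (Real.exp (lam * s) * (lam * V s + V' s)) s := fun s => by
    have he : HasDerivAt (fun y => Real.exp (lam * y)) (Real.exp (lam * s) * lam) s := by
      simpa using ((hasDerivAt_id s).const_mul lam).exp
    refine (he.mul (hd s)).congr_deriv ?_
    ring
  have hanti : AntitoneOn (fun s => Real.exp (lam * s) * V s) (Ici 0) := by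
    refine antitoneOn_of_deriv_nonpos (convex_Ici 0)
      (fun s _ => (hD s).continuousAt.continuousWithinAt)
      (fun s _ => (hD s).differentiableAt.differentiableWithinAt) fun s hs => ?_
    rw [(hD s).deriv]
    rw [interior_Ici] at hs
    have := hV s (le_of_lt hs)
    exact mul_nonpos_of_nonneg_of_nonpos (Real.exp_pos _).le (by linarith)
  have := hanti self_mem_Ici ht ht
  simp only [mul_zero, Real.exp_zero, one_mul] at this
  calc V t = Real.exp (-lam * t) * (Real.exp (lam * t) * V t) := by
        rw [← mul_assoc, ← Real.exp_add]; simp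
    _ ≤ _ := mul_le_mul_of_nonneg_left this (Real.exp_pos _).le

/-- Cauchy–Schwarz in `ℝ⁴`, via Lagrange's identity. -/
theorem sq_dot_le (a b : Fin 3 → ℝ) (c d : ℝ) :
    ((∑ i, a i * b i) + c * d) ^ 2 ≤ ((∑ i, a i ^ 2) + c ^ 2) * ((∑ i, b i ^ 2) + d ^ 2) := by
  simp only [Fin.sum_univ_three]
  nlinarith [sq_nonneg (a 0 * b 1 - a 1 * b 0), sq_nonneg (a 0 * b 2 - a 2 * b 0),
    sq_nonneg (a 1 * b 2 - a 2 * b 1), sq_nonneg (a 0 * d - c * b 0),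
    sq_nonneg (a 1 * d - c * b 1), sq_nonneg (a 2 * d - c * b 2)]

/-! ### The backstepping transformation -/

/-- The integrand `∑ᵢ kᵢ(x,ξ) uᵢ(t,ξ) + k₄(x,ξ) w(t,ξ)` of the backstepping transformation. -/
noncomputable def kernelPairing (k : Fin 3 → ℝ → ℝ → ℝ) (k₄ : ℝ → ℝ → ℝ) (u : Fin 3 → ℝ → ℝ → ℝ)
    (w : ℝ → ℝ → ℝ) (t x ξ : ℝ) : ℝ :=
  (∑ i, k i x ξ * u i t ξ) + k₄ x ξ * w t ξ

/-- The backstepping transform `β` of the state `(u, w)`. It is linear in the state, so its time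
derivative is the transform of `(∂ₜu, ∂ₜw)`. -/
noncomputable def backstep (k : Fin 3 → ℝ → ℝ → ℝ) (k₄ : ℝ → ℝ → ℝ) (u : Fin 3 → ℝ → ℝ → ℝ)
    (w : ℝ → ℝ → ℝ) (t x : ℝ) : ℝ :=
  w t x - ∫ ξ in (0:ℝ)..x, kernelPairing k k₄ u w t x ξ

theorem continuous_kernelPairing {k u : Fin 3 → ℝ → ℝ → ℝ} {k₄ w : ℝ → ℝ → ℝ}
    (hk : ∀ i, Continuous (uncurry (k i))) (hk₄ : Continuous (uncurry k₄))
    (hu : ∀ i, Continuous (uncurry (u i))) (hw : Continuous (uncurry w)) :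
    Continuous fun p : ℝ × ℝ × ℝ => kernelPairing k k₄ u w p.1 p.2.1 p.2.2 := by
  have e : (fun p : ℝ × ℝ × ℝ => kernelPairing k k₄ u w p.1 p.2.1 p.2.2) = fun p =>
      (∑ i, uncurry (k i) (p.2.1, p.2.2) * uncurry (u i) (p.1, p.2.2))
        + uncurry k₄ (p.2.1, p.2.2) * uncurry w (p.1, p.2.2) := rfl
  rw [e]
  fun_prop

theorem hasPartials_backstep {k kx kξ u ut ux : Fin 3 → ℝ → ℝ → ℝ}
    {k₄ k₄x k₄ξ w wt wx : ℝ → ℝ → ℝ}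
    (hk : ∀ i, HasPartials (k i) (kx i) (kξ i)) (hk₄ : HasPartials k₄ k₄x k₄ξ)
    (hu : ∀ i, HasPartials (u i) (ut i) (ux i)) (hw : HasPartials w wt wx) :
    HasPartials (backstep k k₄ u w) (backstep k k₄ ut wt)
      (fun t x => wx t x - (kernelPairing k k₄ u w t x x
        + ∫ ξ in (0:ℝ)..x, kernelPairing kx k₄x u w t x ξ)) := by
  have c := continuous_kernelPairing (fun i => (hk i).cont) hk₄.cont (fun i => (hu i).cont) hw.cont
  have ct := continuous_kernelPairing (fun i => (hk i).cont) hk₄.cont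
    (fun i => (hu i).cont₁) hw.cont₁
  have cx := continuous_kernelPairing (fun i => (hk i).cont₁) hk₄.cont₁
    (fun i => (hu i).cont) hw.cont
  have hI : ∀ {f : ℝ → ℝ → ℝ → ℝ}, Continuous (fun p : ℝ × ℝ × ℝ => f p.1 p.2.1 p.2.2) →
      Continuous fun p : ℝ × ℝ => ∫ ξ in (0:ℝ)..p.2, f p.1 p.2 ξ := fun {f} hf =>
    continuous_parametric_intervalIntegral_of_continuous (f := fun (p : ℝ × ℝ) ξ => f p.1 p.2 ξ)
      (hf.comp (by fun_prop : Continuous fun q : (ℝ × ℝ) × ℝ => (q.1.1, q.1.2, q.2)))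
      continuous_snd
  refine ⟨hw.cont.sub (hI c), hw.cont₁.sub (hI ct), hw.cont₂.sub
    ((c.comp (by fun_prop : Continuous fun q : ℝ × ℝ => (q.1, q.2, q.2))).add (hI cx)), ?_, ?_⟩
  · intro t x
    refine (hw.deriv₁ t x).sub (hasDerivAt_integral_param
      (F := fun τ ξ => kernelPairing k k₄ u w τ x ξ)
      (F' := fun τ ξ => kernelPairing k k₄ ut wt τ x ξ)
      (c.comp (by fun_prop : Continuous fun q : ℝ × ℝ => (q.1, x, q.2)))
      (ct.comp (by fun_prop : Continuous fun q : ℝ × ℝ => (q.1, x, q.2)))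
      (fun τ ξ => ?_) 0 x t)
    exact (HasDerivAt.fun_sum fun i _ => ((hu i).deriv₁ τ ξ).const_mul (k i x ξ)).add
      ((hw.deriv₁ τ ξ).const_mul (k₄ x ξ))
  · intro t x
    refine (hw.deriv₂ t x).sub (hasDerivAt_integral_leibniz
      (h := fun y ξ => kernelPairing k k₄ u w t y ξ)
      (h' := fun y ξ => kernelPairing kx k₄x u w t y ξ)
      (c.comp (by fun_prop : Continuous fun q : ℝ × ℝ => (t, q.1, q.2)))
      (cx.comp (by fun_prop : Continuous fun q : ℝ × ℝ => (t, q.1, q.2)))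
      (fun y ξ => ?_) x)
    exact (HasDerivAt.fun_sum fun i _ => ((hk i).deriv₁ y ξ).mul_const (u i t ξ)).add
      ((hk₄.deriv₁ y ξ).mul_const (w t ξ))

/-- The transform solves `∂ₜβ - μ ∂ₓβ = 0`. After the plant equations are substituted for `∂ₜu` and
`∂ₜw`, the kernel equations turn the integrand into the `ξ`-derivative of
`μ k₄ w - ∑ᵢ γᵢ kᵢ uᵢ`. The boundary terms cancel at `ξ = x` by the diagonal condition and at
`ξ = 0` by the boundary condition for `k₄`. -/
theorem backstep_transport {L μ : ℝ} {γ δ : Fin 3 → ℝ} (hγ : ∀ i, 0 < γ i) (hμ : 0 < μ)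
    {σ : Fin 3 → Fin 3 → ℝ} {α θ : Fin 3 → ℝ → ℝ}
    {k kx kξ u ut ux : Fin 3 → ℝ → ℝ → ℝ} {k₄ k₄x k₄ξ w wt wx : ℝ → ℝ → ℝ}
    (hk : ∀ i, HasPartials (k i) (kx i) (kξ i)) (hk₄ : HasPartials k₄ k₄x k₄ξ)
    (hu : ∀ i, HasPartials (u i) (ut i) (ux i)) (hw : HasPartials w wt wx)
    (hkpde : ∀ i, ∀ x ξ : ℝ, 0 ≤ ξ → ξ ≤ x → x ≤ L →
      μ * kx i x ξ - γ i * kξ i x ξ = (∑ j, σ j i * k j x ξ) + θ i ξ * k₄ x ξ)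
    (hk₄pde : ∀ x ξ : ℝ, 0 ≤ ξ → ξ ≤ x → x ≤ L →
      μ * k₄x x ξ + μ * k₄ξ x ξ = ∑ i, α i ξ * k i x ξ)
    (hkdiag : ∀ i, ∀ x : ℝ, 0 ≤ x → x ≤ L → k i x x = - θ i x / (γ i + μ))
    (hk₄bc : ∀ x : ℝ, 0 ≤ x → x ≤ L → μ * k₄ x 0 = ∑ j, γ j * δ j * k j x 0)
    (hupde : ∀ i, ∀ t x : ℝ, 0 ≤ t → 0 ≤ x → x ≤ L →
      ut i t x + γ i * ux i t x = (∑ j, σ i j * u j t x) + α i x * w t x)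
    (hwpde : ∀ t x : ℝ, 0 ≤ t → 0 ≤ x → x ≤ L →
      wt t x - μ * wx t x = ∑ j, θ j x * u j t x)
    (hubc : ∀ i, ∀ t : ℝ, 0 ≤ t → u i t 0 = δ i * w t 0)
    {t x : ℝ} (ht : 0 ≤ t) (hx : 0 ≤ x) (hxL : x ≤ L) :
    backstep k k₄ ut wt t x + -μ * (wx t x - (kernelPairing k k₄ u w t x x
        + ∫ ξ in (0:ℝ)..x, kernelPairing kx k₄x u w t x ξ)) = 0 := by
  have ct : Continuous fun ξ => kernelPairing k k₄ ut wt t x ξ :=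
    (continuous_kernelPairing (fun i => (hk i).cont) hk₄.cont
    (fun i => (hu i).cont₁) hw.cont₁).comp (by fun_prop : Continuous fun ξ : ℝ => (t, x, ξ))
  have cx : Continuous fun ξ => μ * kernelPairing kx k₄x u w t x ξ :=
    continuous_const.mul ((continuous_kernelPairing (fun i => (hk i).cont₁) hk₄.cont₁
    (fun i => (hu i).cont) hw.cont).comp (by fun_prop : Continuous fun ξ : ℝ => (t, x, ξ)))
  have hFTC : ∫ ξ in (0:ℝ)..x, (kernelPairing k k₄ ut wt t x ξ
      - μ * kernelPairing kx k₄x u w t x ξ)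
      = (μ * (k₄ x x * w t x) - ∑ i, γ i * (k i x x * u i t x))
        - (μ * (k₄ x 0 * w t 0) - ∑ i, γ i * (k i x 0 * u i t 0)) := by
    refine integral_eq_sub_of_hasDerivAt
      (f := fun ξ => μ * (k₄ x ξ * w t ξ) - ∑ i, γ i * (k i x ξ * u i t ξ)) ?_
      ((ct.sub cx).intervalIntegrable _ _)
    intro ξ hξ
    rw [uIcc_of_le hx] at hξ
    refine ((((hk₄.deriv₂ x ξ).mul (hw.deriv₂ t ξ)).const_mul μ).sub
      (HasDerivAt.fun_sum fun i _ =>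
        (((hk i).deriv₂ x ξ).mul ((hu i).deriv₂ t ξ)).const_mul (γ i))).congr_deriv ?_
    have a0 := hkpde 0 x ξ hξ.1 hξ.2 hxL
    have a1 := hkpde 1 x ξ hξ.1 hξ.2 hxL
    have a2 := hkpde 2 x ξ hξ.1 hξ.2 hxL
    have a4 := hk₄pde x ξ hξ.1 hξ.2 hxL
    have b0 := hupde 0 t ξ ht hξ.1 (hξ.2.trans hxL)
    have b1 := hupde 1 t ξ ht hξ.1 (hξ.2.trans hxL)
    have b2 := hupde 2 t ξ ht hξ.1 (hξ.2.trans hxL)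
    have b4 := hwpde t ξ ht hξ.1 (hξ.2.trans hxL)
    simp only [kernelPairing, Fin.sum_univ_three] at *
    linear_combination u 0 t ξ * a0 + u 1 t ξ * a1 + u 2 t ξ * a2 + w t ξ * a4
      - k 0 x ξ * b0 - k 1 x ξ * b1 - k 2 x ξ * b2 - k₄ x ξ * b4
  rw [integral_sub (ct.intervalIntegrable _ _) (cx.intervalIntegrable _ _),
    intervalIntegral.integral_const_mul] at hFTC
  have hd : ∀ i, (γ i + μ) * k i x x = -θ i x := fun i => by
    rw [hkdiag i x hx hxL]
    field_simp [(add_pos (hγ i) hμ).ne']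
  have d0 := hd 0
  have d1 := hd 1
  have d2 := hd 2
  have b4 := hwpde t x ht hx hxL
  have e4 := hk₄bc x hx hxL
  have f0 := hubc 0 t ht
  have f1 := hubc 1 t ht
  have f2 := hubc 2 t ht
  have hp : kernelPairing k k₄ u w t x x
    = k 0 x x * u 0 t x + k 1 x x * u 1 t x + k 2 x x * u 2 t x + k₄ x x * w t x := by
    simp [kernelPairing, Fin.sum_univ_three]
  rw [hp, backstep]
  simp only [Fin.sum_univ_three] at b4 e4 hFTC
  linear_combination b4 - hFTC + d0 * u 0 t x + d1 * u 1 t x + d2 * u 2 t x + e4 * w t 0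
    - γ 0 * k 0 x 0 * f0 - γ 1 * k 1 x 0 * f1 - γ 2 * k 2 x 0 * f2

/-! ### Comparison of the energies of the state and of its transform -/

/-- The energy `∫₀ᴸ exp (-ν x) f(x)² dx`; `ν = 0` is the squared `L²(0,L)` norm, and `ν = -1` gives
the increasing weight used for `β`. -/
noncomputable def wEnergy (ν L : ℝ) (f : ℝ → ℝ) : ℝ := ∫ x in (0:ℝ)..L, Real.exp (-ν * x) * f x ^ 2

theorem wEnergy_nonneg {ν L : ℝ} (hL : 0 ≤ L) (f : ℝ → ℝ) : 0 ≤ wEnergy ν L f :=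
  integral_nonneg hL fun _ _ => by positivity

theorem wEnergy_le_add {ν L : ℝ} (hL : 0 ≤ L) {f g h : ℝ → ℝ} (hf : Continuous f)
    (hg : Continuous g) (hh : Continuous h) (hle : ∀ x, f x ^ 2 ≤ 2 * g x ^ 2 + 2 * h x ^ 2) :
    wEnergy ν L f ≤ 2 * wEnergy ν L g + 2 * wEnergy ν L h := by
  unfold wEnergy
  rw [← intervalIntegral.integral_const_mul, ← intervalIntegral.integral_const_mul,
    ← integral_add]
  · refine integral_mono_on hL (Continuous.intervalIntegrable (by fun_prop) _ _)
      (Continuous.intervalIntegrable (by fun_prop) _ _) fun x _ => ?_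
    nlinarith [hle x, Real.exp_pos (-ν * x)]
  all_goals exact Continuous.intervalIntegrable (by fun_prop) _ _

theorem wEnergy_le_exp_mul {ν ν' L : ℝ} (hν : ν' ≤ ν) (hL : 0 ≤ L) {f : ℝ → ℝ}
    (hf : Continuous f) :
    wEnergy ν' L f ≤ Real.exp ((ν - ν') * L) * wEnergy ν L f := by
  unfold wEnergy
  rw [← intervalIntegral.integral_const_mul]
  refine integral_mono_on hL (Continuous.intervalIntegrable (by fun_prop) _ _)
    (Continuous.intervalIntegrable (by fun_prop) _ _) fun x hx => ?_
  rw [← mul_assoc, ← Real.exp_add]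
  refine mul_le_mul_of_nonneg_right (Real.exp_le_exp.2 ?_) (sq_nonneg _)
  nlinarith [mul_nonneg (sub_nonneg.2 hν) (sub_nonneg.2 hx.2)]

theorem wEnergy_anti {ν ν' L : ℝ} (hν : ν' ≤ ν) (hL : 0 ≤ L) {f : ℝ → ℝ}
    (hf : Continuous f) : wEnergy ν L f ≤ wEnergy ν' L f := by
  refine integral_mono_on hL (Continuous.intervalIntegrable (by fun_prop) _ _)
    (Continuous.intervalIntegrable (by fun_prop) _ _) fun x hx => ?_
  refine mul_le_mul_of_nonneg_right (Real.exp_le_exp.2 ?_) (sq_nonneg _)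
  nlinarith [hx.1]

theorem wEnergy_sum_eq {ν L : ℝ} {u : Fin 3 → ℝ → ℝ} {w : ℝ → ℝ}
    (hu : ∀ i, Continuous (u i)) (hw : Continuous w) :
    ∫ x in (0:ℝ)..L, Real.exp (-ν * x) * ((∑ i, u i x ^ 2) + w x ^ 2)
      = (∑ i, wEnergy ν L (u i)) + wEnergy ν L w := by
  unfold wEnergy
  rw [← integral_finsetSum, ← integral_add]
  · simp only [mul_add, Finset.mul_sum]
  all_goals first
    | exact Continuous.intervalIntegrable (by fun_prop) _ _
    | exact fun i _ => Continuous.intervalIntegrable (by fun_prop) _ _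

/-- The difference `w - β` has weighted energy at most a sixth of that of the state. -/
theorem wEnergy_volterra_le {k : Fin 3 → ℝ → ℝ → ℝ} {k₄ : ℝ → ℝ → ℝ}
    {u : Fin 3 → ℝ → ℝ → ℝ} {w : ℝ → ℝ → ℝ}
    (hk : ∀ i, Continuous (uncurry (k i))) (hk₄ : Continuous (uncurry k₄))
    (hu : ∀ i, Continuous (uncurry (u i))) (hw : Continuous (uncurry w))
    {ν L C : ℝ} (hL : 0 < L) (hC : 0 ≤ C)
    (hkC : ∀ x ξ, 0 ≤ ξ → ξ ≤ x → x ≤ L → (∑ i, k i x ξ ^ 2) + k₄ x ξ ^ 2 ≤ C)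
    (hν6 : 6 * (L * C) ≤ ν) (t : ℝ) :
    6 * wEnergy ν L (fun x => ∫ ξ in (0:ℝ)..x, kernelPairing k k₄ u w t x ξ)
      ≤ (∑ i, wEnergy ν L (u i t)) + wEnergy ν L (w t) := by
  have cu : ∀ i, Continuous (u i t) := fun i => (hu i).comp (Continuous.prodMk_right t)
  have cw : Continuous (w t) := hw.comp (Continuous.prodMk_right t)
  rw [← wEnergy_sum_eq cu cw]
  refine integral_exp_mul_volterra_sq_le
    (Q := fun x ξ => kernelPairing k k₄ u w t x ξ) (s := fun x => (∑ i, u i t x ^ 2) + w t x ^ 2)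
    ((continuous_kernelPairing hk hk₄ hu hw).comp
      (by fun_prop : Continuous fun q : ℝ × ℝ => (t, q.1, q.2)))
    (by fun_prop) (fun x => by positivity) hL hC (fun x ξ h1 h2 h3 => ?_) hν6
  exact (sq_dot_le (fun i => k i x ξ) (fun i => u i t ξ) _ _).trans
    (mul_le_mul_of_nonneg_right (hkC x ξ h1 h2 h3) (by positivity))

/-- The zeroth-order terms of the equation for `uᵢ` contribute at most a multiple, independent of
the weight `ν`, of the weighted energy of the state. -/
theorem source_le {L ν C : ℝ} (hL : 0 ≤ L) {u : Fin 3 → ℝ → ℝ} {w g : ℝ → ℝ}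
    (hu : ∀ i, Continuous (u i)) (hw : Continuous w) (hg : Continuous g) (i : Fin 3)
    {s : Fin 3 → ℝ} {a : ℝ → ℝ}
    (hC : ∀ x, 0 ≤ x → x ≤ L → 1 + ((∑ j, s j ^ 2) + a x ^ 2) ≤ C)
    (hgeq : ∀ x, 0 ≤ x → x ≤ L → g x = (∑ j, s j * u j x) + a x * w x) :
    ∫ x in (0:ℝ)..L, Real.exp (-ν * x) * (2 * u i x * g x)
      ≤ C * ((∑ i, wEnergy ν L (u i)) + wEnergy ν L w) := by
  rw [← wEnergy_sum_eq hu hw, ← intervalIntegral.integral_const_mul]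
  refine integral_mono_on hL (Continuous.intervalIntegrable (by fun_prop) _ _)
    (Continuous.intervalIntegrable (by fun_prop) _ _) fun x hx => ?_
  have h1 : g x ^ 2 ≤ ((∑ j, s j ^ 2) + a x ^ 2) * ((∑ j, u j x ^ 2) + w x ^ 2) := by
    rw [hgeq x hx.1 hx.2]
    exact sq_dot_le s (fun j => u j x) _ _
  have h2 : u i x ^ 2 ≤ (∑ j, u j x ^ 2) + w x ^ 2 := by
    have h : u i x ^ 2 ≤ ∑ j, u j x ^ 2 :=
      Finset.single_le_sum (f := fun j => u j x ^ 2) (fun j _ => sq_nonneg _) (Finset.mem_univ i)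
    linarith [sq_nonneg (w x)]
  have h3 : 2 * u i x * g x ≤ C * ((∑ j, u j x ^ 2) + w x ^ 2) := by
    have h4 : (1 + ((∑ j, s j ^ 2) + a x ^ 2)) * ((∑ j, u j x ^ 2) + w x ^ 2)
        ≤ C * ((∑ j, u j x ^ 2) + w x ^ 2) :=
      mul_le_mul_of_nonneg_right (hC x hx.1 hx.2) (by positivity)
    nlinarith [sq_nonneg (u i x - g x)]
  calc _ ≤ Real.exp (-ν * x) * (C * ((∑ j, u j x ^ 2) + w x ^ 2)) :=
        mul_le_mul_of_nonneg_left h3 (Real.exp_pos _).le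
    _ = _ := by ring

theorem exists_kernel_bound {k : Fin 3 → ℝ → ℝ → ℝ} {k₄ : ℝ → ℝ → ℝ}
    (hk : ∀ i, Continuous (uncurry (k i))) (hk₄ : Continuous (uncurry k₄)) (L : ℝ) :
    ∃ C, 0 ≤ C ∧ ∀ x ξ, 0 ≤ ξ → ξ ≤ x → x ≤ L → (∑ i, k i x ξ ^ 2) + k₄ x ξ ^ 2 ≤ C := by
  have hc : Continuous fun p : ℝ × ℝ => (∑ i, uncurry (k i) p ^ 2) + uncurry k₄ p ^ 2 := by
    fun_prop
  obtain ⟨C, hC⟩ := ((isCompact_Icc (a := (0:ℝ)) (b := L)).prod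
    (isCompact_Icc (a := (0:ℝ)) (b := L))).exists_bound_of_continuousOn hc.continuousOn
  refine ⟨max C 0, le_max_right _ _, fun x ξ h1 h2 h3 => ?_⟩
  exact (le_abs_self _).trans ((hC (x, ξ) ⟨⟨h1.trans h2, h3⟩, h1, h2.trans h3⟩).trans
    (le_max_left _ _))

theorem exists_source_bound {L : ℝ} {α : Fin 3 → ℝ → ℝ} (σ : Fin 3 → Fin 3 → ℝ)
    (hα : ∀ i, ContinuousOn (α i) (Icc 0 L)) :
    ∃ C, 0 ≤ C ∧ ∀ i x, 0 ≤ x → x ≤ L → 1 + ((∑ j, σ i j ^ 2) + α i x ^ 2) ≤ C := by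
  have : ∀ i, ∃ C, ∀ x ∈ Icc 0 L, ‖1 + ((∑ j, σ i j ^ 2) + α i x ^ 2)‖ ≤ C := fun i =>
    isCompact_Icc.exists_bound_of_continuousOn
      (continuousOn_const.add (continuousOn_const.add ((hα i).pow 2)))
  choose C hC using this
  refine ⟨∑ i, |C i|, by positivity, fun i x h0 hL => ?_⟩
  exact (le_abs_self _).trans ((hC i x ⟨h0, hL⟩).trans ((le_abs_self _).trans
    (Finset.single_le_sum (f := fun i => |C i|) (fun _ _ => abs_nonneg _) (Finset.mem_univ i))))

/-! ### Closed-loop stability -/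

theorem state_feedback_exponential_stability
    (L : ℝ) (hL : 0 < L)
    (γ : Fin 3 → ℝ) (hγ : ∀ i, 0 < γ i)
    (μ : ℝ) (hμ : 0 < μ)
    (σ : Fin 3 → Fin 3 → ℝ) (δ : Fin 3 → ℝ) (ρ₁ ρ₂ : ℝ)
    (α θ : Fin 3 → ℝ → ℝ)
    (hα : ∀ i, ContinuousOn (α i) (Set.Icc 0 L))
    (hθ : ∀ i, ContinuousOn (θ i) (Set.Icc 0 L))
    -- controller kernels k₁,k₂,k₃,k₄ on the triangle T = {0 ≤ ξ ≤ x ≤ L}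
    (k : Fin 3 → ℝ → ℝ → ℝ) (k₄ : ℝ → ℝ → ℝ)
    (hkC1 : ∀ i, ContDiff ℝ 1 (Function.uncurry (k i)))
    (hk₄C1 : ContDiff ℝ 1 (Function.uncurry k₄))
    (hkpde : ∀ i, ∀ x ξ : ℝ, 0 ≤ ξ → ξ ≤ x → x ≤ L →
      μ * deriv (fun y => k i y ξ) x - γ i * deriv (fun s => k i x s) ξ
        = (∑ j, σ j i * k j x ξ) + θ i ξ * k₄ x ξ)
    (hk₄pde : ∀ x ξ : ℝ, 0 ≤ ξ → ξ ≤ x → x ≤ L →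
      μ * deriv (fun y => k₄ y ξ) x + μ * deriv (fun s => k₄ x s) ξ
        = ∑ i, α i ξ * k i x ξ)
    (hkdiag : ∀ i, ∀ x : ℝ, 0 ≤ x → x ≤ L → k i x x = - θ i x / (γ i + μ))
    (hk₄bc : ∀ x : ℝ, 0 ≤ x → x ≤ L → μ * k₄ x 0 = ∑ j, γ j * δ j * k j x 0) :
    ∃ M > (0:ℝ), ∃ lam > (0:ℝ),
      ∀ (u : Fin 3 → ℝ → ℝ → ℝ) (w : ℝ → ℝ → ℝ) (U : ℝ → ℝ),
        (∀ i, ContDiff ℝ 1 (Function.uncurry (u i))) →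
        ContDiff ℝ 1 (Function.uncurry w) →
        -- interior equations of the plant
        (∀ i, ∀ t x : ℝ, 0 ≤ t → 0 ≤ x → x ≤ L →
          deriv (fun τ => u i τ x) t + γ i * deriv (fun y => u i t y) x
            = (∑ j, σ i j * u j t x) + α i x * w t x) →
        (∀ t x : ℝ, 0 ≤ t → 0 ≤ x → x ≤ L →
          deriv (fun τ => w τ x) t - μ * deriv (fun y => w t y) x
            = ∑ j, θ j x * u j t x) →
        -- boundary conditions
        (∀ i, ∀ t : ℝ, 0 ≤ t → u i t 0 = δ i * w t 0) →
        (∀ t : ℝ, 0 ≤ t → w t L = ρ₁ * u 0 t L + ρ₂ * u 1 t L + U t) →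
        -- the full-state feedback control law
        (∀ t : ℝ, 0 ≤ t →
          U t = (∑ i, ∫ ξ in (0:ℝ)..L, k i L ξ * u i t ξ)
              + (∫ ξ in (0:ℝ)..L, k₄ L ξ * w t ξ)
              - ρ₁ * u 0 t L - ρ₂ * u 1 t L) →
        ∀ t : ℝ, 0 ≤ t →
          (∑ i, ∫ x in (0:ℝ)..L, (u i t x) ^ 2) + (∫ x in (0:ℝ)..L, (w t x) ^ 2)
            ≤ M * Real.exp (-lam * t) *
              ((∑ i, ∫ x in (0:ℝ)..L, (u i 0 x) ^ 2)
                + (∫ x in (0:ℝ)..L, (w 0 x) ^ 2)) := by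
  choose kx kξ hk using fun i => (hkC1 i).exists_hasPartials
  obtain ⟨k₄x, k₄ξ, hk₄⟩ := hk₄C1.exists_hasPartials
  simp only [fun i x ξ => ((hk i).deriv₁ x ξ).deriv, fun i x ξ => ((hk i).deriv₂ x ξ).deriv]
    at hkpde
  simp only [fun x ξ => (hk₄.deriv₁ x ξ).deriv, fun x ξ => (hk₄.deriv₂ x ξ).deriv] at hk₄pde
  obtain ⟨C, hC0, hkC⟩ := exists_kernel_bound (fun i => (hk i).cont) hk₄.cont L
  obtain ⟨C₁, hC₁0, hC₁⟩ := exists_source_bound σ hα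
  obtain ⟨i₀, hi₀⟩ := Finite.exists_min γ
  set m := γ i₀
  have hm : 0 < m := hγ i₀
  -- The first summand makes the Volterra integral small, the second lets the damping `m ν`
  -- dominate the zeroth-order terms.
  set ν := 6 * (L * C) + (5 * C₁ + 1) / m with hν_def
  have hν6 : 6 * (L * C) ≤ ν := by
    rw [hν_def]; have : 0 ≤ (5 * C₁ + 1) / m := by positivity
    linarith
  have hν : 0 < ν := by positivity
  have hνm : 5 * C₁ + 1 ≤ m * ν := by
    have : m * ν = m * (6 * (L * C)) + (5 * C₁ + 1) := by
      rw [hν_def]; field_simp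
    rw [this]; have : 0 ≤ m * (6 * (L * C)) := by positivity
    linarith
  set D := ∑ i, γ i * δ i ^ 2
  have hD0 : 0 ≤ D := Finset.sum_nonneg fun i _ => mul_nonneg (hγ i).le (sq_nonneg _)
  -- `A μ` pays for the inflow `D β(t,0)²` and for the part of `W` that is bounded by `β`.
  set A := (D + 9 * C₁) / μ + 1 with hA_def
  have hA1 : 1 ≤ A := by
    have : 0 ≤ (D + 9 * C₁) / μ := by positivity
    linarith
  have hAμ : A * μ = D + 9 * C₁ + μ := by rw [hA_def]; field_simp
  set lam := min 1 (μ / A)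
  have hlam : 0 < lam := lt_min one_pos (by positivity)
  have hlam1 : lam ≤ 1 := min_le_left _ _
  have hlamA : lam * A ≤ μ := by
    have : lam ≤ μ / A := min_le_right _ _
    rwa [le_div_iff₀ (by linarith)] at this
  set M := 3 * Real.exp (ν * L) * (1 + 3 * A * Real.exp ((ν + 1) * L)) with hM_def
  refine ⟨M, by positivity, lam, hlam, ?_⟩
  intro u w U huC1 hwC1 hupde hwpde hubc hwbc hU
  choose ut ux hu using fun i => (huC1 i).exists_hasPartials
  obtain ⟨wt, wx, hw⟩ := hwC1.exists_hasPartials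
  simp only [fun i x ξ => ((hu i).deriv₁ x ξ).deriv, fun i x ξ => ((hu i).deriv₂ x ξ).deriv]
    at hupde
  simp only [fun x ξ => (hw.deriv₁ x ξ).deriv, fun x ξ => (hw.deriv₂ x ξ).deriv] at hwpde
  have hβ := hasPartials_backstep hk hk₄ hu hw
  set β := backstep k k₄ u w with hβ_def
  set βt := backstep k k₄ ut wt
  set βx := fun t x => wx t x - (kernelPairing k k₄ u w t x x
        + ∫ ξ in (0:ℝ)..x, kernelPairing kx k₄x u w t x ξ)
  have hβpde : ∀ t x, 0 ≤ t → 0 ≤ x → x ≤ L → βt t x + -μ * βx t x = 0 := fun t x ht h0 h1 =>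
    backstep_transport hγ hμ hk hk₄ hu hw hkpde hk₄pde hkdiag hk₄bc hupde hwpde hubc ht h0 h1
  have hβ0 : ∀ t, β t 0 = w t 0 := fun t => by simp [hβ_def, backstep]
  have cu : ∀ i t, Continuous (u i t) := fun i t => (hu i).cont.comp (Continuous.prodMk_right t)
  have cw : ∀ t, Continuous (w t) := fun t => hw.cont.comp (Continuous.prodMk_right t)
  have cβ : ∀ t, Continuous (β t) := fun t => hβ.cont.comp (Continuous.prodMk_right t)
  have hβL : ∀ t, 0 ≤ t → β t L = 0 := fun t ht => by
    have e : ∫ ξ in (0:ℝ)..L, kernelPairing k k₄ u w t L ξ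
        = (∑ i, ∫ ξ in (0:ℝ)..L, k i L ξ * u i t ξ) + ∫ ξ in (0:ℝ)..L, k₄ L ξ * w t ξ := by
      have ck : ∀ i, Continuous (k i L) := fun i =>
        (hk i).cont.comp (Continuous.prodMk_right L)
      have ck₄ : Continuous (k₄ L) := hk₄.cont.comp (Continuous.prodMk_right L)
      have c1 : ∀ i, Continuous fun ξ => k i L ξ * u i t ξ := fun i => (ck i).mul (cu i t)
      have c2 : Continuous fun ξ => k₄ L ξ * w t ξ := ck₄.mul (cw t)
      rw [← integral_finsetSum fun i _ => (c1 i).intervalIntegrable _ _, ← integral_add]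
      · rfl
      · exact (continuous_finsetSum _ fun i _ => c1 i).intervalIntegrable _ _
      · exact c2.intervalIntegrable _ _
    have := hwbc t ht
    have := hU t ht
    rw [hβ_def, backstep, e]
    linarith
  let E : ℝ → ℝ := fun t => ∑ i, wEnergy ν L (u i t)
  let W : ℝ → ℝ := fun t => wEnergy ν L (w t)
  let B : ℝ → ℝ := fun t => wEnergy ν L (β t)
  let B' : ℝ → ℝ := fun t => wEnergy (-1) L (β t)
  have hE0 : ∀ t, 0 ≤ E t := fun t => Finset.sum_nonneg fun i _ => wEnergy_nonneg hL.le _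
  have hW0 : ∀ t, 0 ≤ W t := fun t => wEnergy_nonneg hL.le _
  have hB'0 : ∀ t, 0 ≤ B' t := fun t => wEnergy_nonneg hL.le _
  have hBB' : ∀ t, B t ≤ B' t := fun t => wEnergy_anti (by linarith) hL.le (cβ t)
  have hB'B : ∀ t, B' t ≤ Real.exp ((ν + 1) * L) * B t := fun t => by
    have := wEnergy_le_exp_mul (ν := ν) (ν' := -1) (by linarith) hL.le (cβ t)
    rwa [sub_neg_eq_add] at this
  have hvol := wEnergy_volterra_le (fun i => (hk i).cont) hk₄.cont (fun i => (hu i).cont) hw.cont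
    hL hC0 hkC hν6
  have cI : ∀ t, Continuous fun x => ∫ ξ in (0:ℝ)..x, kernelPairing k k₄ u w t x ξ := fun t => by
    have : (fun x => ∫ ξ in (0:ℝ)..x, kernelPairing k k₄ u w t x ξ)
      = fun x => w t x - β t x := by funext x; simp [hβ_def, backstep]
    rw [this]; exact (cw t).sub (cβ t)
  have hWB : ∀ t, W t ≤ 3 * B t + E t / 2 := fun t => by
    have h1 := wEnergy_le_add (ν := ν) hL.le (cw t) (cβ t) (cI t) fun x => by
      have : w t x = β t x + ∫ ξ in (0:ℝ)..x, kernelPairing k k₄ u w t x ξ := by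
        simp [hβ_def, backstep]
      rw [this]
      nlinarith [sq_nonneg (β t x - ∫ ξ in (0:ℝ)..x, kernelPairing k k₄ u w t x ξ)]
    have h2 := hvol t
    simp only [E, W, B]
    linarith
  have hBW : ∀ t, B t ≤ 3 * (E t + W t) := fun t => by
    have h1 := wEnergy_le_add (ν := ν) hL.le (cβ t) (cw t) (cI t) fun x => by
      rw [hβ_def, backstep]
      nlinarith [sq_nonneg (w t x + ∫ ξ in (0:ℝ)..x, kernelPairing k k₄ u w t x ξ)]
    have h2 := hvol t
    have h3 := hE0 t
    have h4 := hW0 t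
    simp only [E, W, B] at *
    linarith
  let V : ℝ → ℝ := fun t => E t + A * B' t
  have hV := fun t => (HasDerivAt.fun_sum (u := Finset.univ) fun i _ =>
    (hu i).hasDerivAt_energy (-ν) (γ i) L t).add
      ((hβ.hasDerivAt_energy (-(-1)) (-μ) L t).const_mul A)
  have hdecay : ∀ t, 0 ≤ t → V t ≤ Real.exp (-lam * t) * V 0 := fun t ht => by
    refine le_exp_mul_of_deriv_le (V := V) hV (fun t ht => ?_) ht
    have hR : ∫ x in (0:ℝ)..L, Real.exp (-(-1) * x) * (2 * β t x * (βt t x + -μ * βx t x)) = 0 := by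
      rw [integral_congr (g := fun _ => (0:ℝ))]
      · simp
      · intro x hx
        rw [uIcc_of_le hL.le] at hx
        simp only [hβpde t x ht hx.1 hx.2, mul_zero]
    have hi : ∀ i, γ i * (u i t 0 ^ 2 - Real.exp (-ν * L) * u i t L ^ 2)
        + γ i * -ν * (∫ x in (0:ℝ)..L, Real.exp (-ν * x) * u i t x ^ 2)
        + ∫ x in (0:ℝ)..L, Real.exp (-ν * x) * (2 * u i t x * (ut i t x + γ i * ux i t x))
        ≤ γ i * δ i ^ 2 * w t 0 ^ 2 - m * ν * wEnergy ν L (u i t) + C₁ * (E t + W t) := by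
      intro i
      have c1 : Continuous fun x => ut i t x + γ i * ux i t x :=
        ((hu i).cont₁.comp (Continuous.prodMk_right t)).add
          (continuous_const.mul ((hu i).cont₂.comp (Continuous.prodMk_right t)))
      have h1 := source_le (ν := ν) hL.le (fun j => cu j t) (cw t) c1 i (hC₁ i)
        (fun x h0 h1 => hupde i t x ht h0 h1)
      have h2 : 0 ≤ γ i * (Real.exp (-ν * L) * u i t L ^ 2) :=
        mul_nonneg (hγ i).le (by positivity)
      have h3 : m * ν * wEnergy ν L (u i t) ≤ γ i * ν * wEnergy ν L (u i t) :=
        mul_le_mul_of_nonneg_right (mul_le_mul_of_nonneg_right (hi₀ i) hν.le)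
          (wEnergy_nonneg hL.le _)
      rw [hubc i t ht]
      simp only [E, W]
      rw [wEnergy] at h3
      rw [wEnergy]
      linarith
    have hsum := Finset.sum_le_sum fun i (_ : i ∈ Finset.univ) => hi i
    have hrhs : ∑ i, (γ i * δ i ^ 2 * w t 0 ^ 2 - m * ν * wEnergy ν L (u i t) + C₁ * (E t + W t))
        = D * w t 0 ^ 2 - m * ν * E t + 3 * (C₁ * (E t + W t)) := by
      rw [Finset.sum_add_distrib, Finset.sum_sub_distrib, ← Finset.sum_mul, ← Finset.mul_sum]
      simp [D, E]
    rw [hrhs] at hsum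
    refine (add_le_add_left hsum _).trans ?_
    rw [hR, hβL t ht, hβ0 t]
    change _ + A * (-μ * (w t 0 ^ 2 - _) + -μ * -(-1) * B' t + 0) ≤ -lam * (E t + A * B' t)
    have p1 := mul_le_mul_of_nonneg_left (hWB t) hC₁0
    have p2 := mul_le_mul_of_nonneg_left (hBB' t) hC₁0
    have p3 := mul_le_mul_of_nonneg_right hνm (hE0 t)
    have p4 := mul_le_mul_of_nonneg_right hlam1 (hE0 t)
    have p5 := mul_le_mul_of_nonneg_right hlamA (hB'0 t)
    have p6 := mul_nonneg hC₁0 (hE0 t)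
    have p7 := mul_nonneg hμ.le (sq_nonneg (w t 0))
    have p8 := mul_nonneg hC₁0 (sq_nonneg (w t 0))
    have p9 := mul_nonneg hD0 (hB'0 t)
    have q1 : A * (-μ * (w t 0 ^ 2 - Real.exp (-(-1) * L) * 0 ^ 2) + -μ * -(-1) * B' t + 0)
      = - (D + 9 * C₁ + μ) * (w t 0 ^ 2 + B' t) := by rw [← hAμ]; ring
    rw [q1]
    nlinarith
  -- Undo the weights: every weighted energy is comparable with the unweighted one.
  intro t ht
  have hS : ∀ t, (∑ i, ∫ x in (0:ℝ)..L, (u i t x) ^ 2) + (∫ x in (0:ℝ)..L, (w t x) ^ 2)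
      = (∑ i, wEnergy 0 L (u i t)) + wEnergy 0 L (w t) := fun t => by simp [wEnergy]
  rw [hS, hS]
  have hup : (∑ i, wEnergy 0 L (u i t)) + wEnergy 0 L (w t)
      ≤ Real.exp (ν * L) * (E t + W t) := by
    simp only [E, W]
    rw [mul_add, Finset.mul_sum]
    have h := fun f (hf : Continuous f) => wEnergy_le_exp_mul hν.le hL.le hf
    rw [sub_zero] at h
    exact add_le_add (Finset.sum_le_sum fun i _ => h _ (cu i t)) (h _ (cw t))
  have hlo : E 0 + W 0 ≤ (∑ i, wEnergy 0 L (u i 0)) + wEnergy 0 L (w 0) :=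
    add_le_add (Finset.sum_le_sum fun i _ => wEnergy_anti hν.le hL.le (cu i 0))
      (wEnergy_anti hν.le hL.le (cw 0))
  set S₀ := (∑ i, wEnergy 0 L (u i 0)) + wEnergy 0 L (w 0)
  have hEW : E t + W t ≤ 3 * V t := by
    have := mul_le_mul_of_nonneg_right hA1 (hB'0 t)
    have := hWB t
    have := hBB' t
    have := hE0 t
    simp only [V]
    linarith
  have hV0 : V 0 ≤ (1 + 3 * A * Real.exp ((ν + 1) * L)) * S₀ := by
    have h1 : B' 0 ≤ Real.exp ((ν + 1) * L) * (3 * S₀) := (hB'B 0).trans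
      (mul_le_mul_of_nonneg_left ((hBW 0).trans (by linarith)) (Real.exp_pos _).le)
    have h2 := mul_le_mul_of_nonneg_left h1 (by linarith : 0 ≤ A)
    have h3 := hW0 0
    simp only [V]
    linarith
  calc _ ≤ Real.exp (ν * L) * (E t + W t) := hup
    _ ≤ Real.exp (ν * L) * (3 * (Real.exp (-lam * t)
          * ((1 + 3 * A * Real.exp ((ν + 1) * L)) * S₀))) := by
        have h1 := mul_le_mul_of_nonneg_left hV0 (Real.exp_pos (-lam * t)).le
        have h2 := hdecay t ht
        exact mul_le_mul_of_nonneg_left (by linarith) (Real.exp_pos _).le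
    _ = _ := by rw [hM_def]; ring
end

section
/- Consider the observer error system on (t,x) ∈ [0,∞)×[0,L]: ∂_t ũ_i + γ_i ∂_x ũ_i = Σ_{j=1}^3 σ_{ij} ũ_j + α_i(x) w̃ + p_i(x) w̃(t,0) for i = 1,2,3, ∂_t w̃ − μ ∂_x w̃ = Σ_{j=1}^3 θ_j(x) ũ_j + p_4(x) w̃(t,0), with boundary conditions ũ_i(t,0) = 0 and w̃(t,L) = ρ_1 ũ_1(t,L) + ρ_2 ũ_2(t,L), where the output-injection gains are p_i(x) = −μ m_i(x,0) for i = 1,2,3,4. Then there exist constants M > 0 and λ > 0, depending only on L, γ_1, γ_2, γ_3, μ, the σ_{ij}, the functions α_i, θ_i, ρ_1, ρ_2 and the kernels m_1, …, m_4, such that every C¹ solution (ũ_1, ũ_2, ũ_3, w̃) satisfies Σ_{i=1}^3 ‖ũ_i(t,·)‖² + ‖w̃(t,·)‖² ≤ M e^{−λ t} ( Σ_{i=1}^3 ‖ũ_i(0,·)‖² + ‖w̃(0,·)‖² ) for all t ≥ 0; that is, the observer error converges exponentially to zero in the L² sense. -/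
/-!
The kernels `m₁, …, m₄` define a backstepping transformation `ũᵢ = aᵢ + V_{mᵢ} b`,
`w̃ = b + V_{m₄} b`, where `V_k f(x) = ∫₀ˣ k(x,ξ) f(ξ) dξ`. The operator `1 + V_{m₄}` on `C([0,L])`
is invertible because Volterra operators are quasinilpotent (`isUnit_one_add_voltX`), so
`b = (1 + V_{m₄})⁻¹ w̃` is again a C¹ curve in time with values in `C([0,L])`
(`exists_volterra_curve`).

The kernel equations turn the error system into the target system
`∂ₜaᵢ + γᵢ ∂ₓaᵢ = ∑ⱼ σᵢⱼ aⱼ - V_{mᵢ} R`, `∂ₜb - μ ∂ₓb = R`, with `R + V_{m₄} R = ∑ⱼ θⱼ aⱼ`,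
`aᵢ(t,0) = 0` and `b(t,L) = ρ₁ a₁(t,L) + ρ₂ a₂(t,L)` (`target_transport`, `target_source`). The
right-going components `aᵢ` no longer depend on `b`, and every nonlocal term at `x` only involves
values to the left of `x`. In the norm with weight `e^{-δx}` a Volterra operator has squared norm
`O(1/δ)` (`wnorm_volt_le`), so for `δ` large the energy of `a` decays and also controls `R`.

With `κ` large, `κ ∑ᵢ ∫ e^{-δx} aᵢ² + ∫ eˣ b²` is therefore a strict Lyapunov functional
(`lyapunov_dissipation`). It is equivalent to the L² energy of the original variables, the
transformation and its inverse being bounded (`lyapunov_equiv`), and Grönwall's inequality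
concludes.
-/

open Set MeasureTheory intervalIntegral Topology

namespace ObserverError

/-! ### Functions of two variables of class C¹ -/

section TwoVar

lemma hasDerivAt_fst {w : ℝ → ℝ → ℝ} (hw : ContDiff ℝ 1 (Function.uncurry w)) (t x : ℝ) :
    HasDerivAt (fun τ => w τ x) (deriv (fun τ => w τ x) t) t := by
  have h : Differentiable ℝ (fun τ => w τ x) :=
    (hw.differentiable one_ne_zero).comp (differentiable_id.prodMk (differentiable_const x))
  exact (h t).hasDerivAt

lemma hasDerivAt_snd {w : ℝ → ℝ → ℝ} (hw : ContDiff ℝ 1 (Function.uncurry w)) (t x : ℝ) :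
    HasDerivAt (fun y => w t y) (deriv (fun y => w t y) x) x := by
  have h : Differentiable ℝ (fun y => w t y) :=
    (hw.differentiable one_ne_zero).comp ((differentiable_const t).prodMk differentiable_id)
  exact (h x).hasDerivAt

lemma continuous_deriv_fst {w : ℝ → ℝ → ℝ} (hw : ContDiff ℝ 1 (Function.uncurry w)) :
    Continuous (Function.uncurry fun t x => deriv (fun τ => w τ x) t) := by
  have h : (Function.uncurry fun t x => deriv (fun τ => w τ x) t)
      = fun p => fderiv ℝ (Function.uncurry w) p (1, 0) := by
    funext ⟨t, x⟩
    have h1 := (hw.differentiable one_ne_zero (t, x)).hasFDerivAt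
    have h2 : HasDerivAt (fun τ : ℝ => (τ, x)) ((1 : ℝ), (0 : ℝ)) t :=
      (hasDerivAt_id t).prodMk (hasDerivAt_const t x)
    exact (h1.comp_hasDerivAt t h2).deriv
  rw [h]
  exact (hw.continuous_fderiv one_ne_zero).clm_apply continuous_const

lemma continuous_deriv_snd {w : ℝ → ℝ → ℝ} (hw : ContDiff ℝ 1 (Function.uncurry w)) :
    Continuous (Function.uncurry fun t x => deriv (fun y => w t y) x) := by
  have h : (Function.uncurry fun t x => deriv (fun y => w t y) x)
      = fun p => fderiv ℝ (Function.uncurry w) p (0, 1) := by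
    funext ⟨t, x⟩
    have h1 := (hw.differentiable one_ne_zero (t, x)).hasFDerivAt
    have h2 : HasDerivAt (fun y : ℝ => (t, y)) ((0 : ℝ), (1 : ℝ)) x :=
      (hasDerivAt_const x t).prodMk (hasDerivAt_id x)
    exact (h1.comp_hasDerivAt x h2).deriv
  rw [h]
  exact (hw.continuous_fderiv one_ne_zero).clm_apply continuous_const

lemma exists_bound_square {k : ℝ → ℝ → ℝ} (hk : Continuous (Function.uncurry k)) (L : ℝ) :
    ∃ C, 0 ≤ C ∧ ∀ x ∈ Icc 0 L, ∀ ξ ∈ Icc 0 L, |k x ξ| ≤ C := by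
  obtain ⟨C, hC⟩ := (isCompact_Icc.prod isCompact_Icc : IsCompact (Icc 0 L ×ˢ Icc 0 L)).exists_bound_of_continuousOn
    hk.continuousOn
  exact ⟨max C 0, le_max_right _ _, fun x hx ξ hξ => (hC (x, ξ) ⟨hx, hξ⟩).trans (le_max_left _ _)⟩

end TwoVar

/-! ### Volterra integrals -/

/-- The Volterra integral `x ↦ ∫₀ˣ k(x,ξ) f(ξ) dξ`. -/
noncomputable def volt (k : ℝ → ℝ → ℝ) (f : ℝ → ℝ) (x : ℝ) : ℝ := ∫ ξ in (0 : ℝ)..x, k x ξ * f ξ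

section Volt

variable {k : ℝ → ℝ → ℝ} {f : ℝ → ℝ}

lemma continuous_volt (hk : Continuous (Function.uncurry k)) (hf : Continuous f) :
    Continuous (volt k f) := by
  unfold volt
  have : Continuous (Function.uncurry fun x ξ => k x ξ * f ξ) := by
    show Continuous fun p : ℝ × ℝ => Function.uncurry k p * f p.2
    fun_prop
  exact continuous_parametric_intervalIntegral_of_continuous this continuous_id

lemma continuous_kernel_mul (hk : Continuous (Function.uncurry k)) (hf : Continuous f) (x : ℝ) :
    Continuous fun ξ => k x ξ * f ξ := by
  have : Continuous fun ξ => Function.uncurry k (x, ξ) := by fun_prop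
  exact this.mul hf

/-- Differentiation of a parametric integral over a fixed interval. -/
lemma hasDerivAt_parametric {kx : ℝ → ℝ → ℝ} (hk : Continuous (Function.uncurry k))
    (hkx : Continuous (Function.uncurry kx))
    (hd : ∀ x ξ, HasDerivAt (fun y => k y ξ) (kx x ξ) x) (hf : Continuous f) (x z : ℝ) :
    HasDerivAt (fun y => ∫ ξ in (0 : ℝ)..z, k y ξ * f ξ) (∫ ξ in (0 : ℝ)..z, kx x ξ * f ξ) x := by
  have hc : Continuous fun p : ℝ × ℝ => kx p.1 p.2 * f p.2 := by
    have : Continuous fun p : ℝ × ℝ => Function.uncurry kx p * f p.2 := by fun_prop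
    exact this
  obtain ⟨C, hC⟩ := (isCompact_Icc.prod isCompact_uIcc :
    IsCompact (Icc (x - 1) (x + 1) ×ˢ uIcc 0 z)).exists_bound_of_continuousOn hc.continuousOn
  refine (intervalIntegral.hasDerivAt_integral_of_dominated_loc_of_deriv_le (bound := fun _ => C)
    (F' := fun y ξ => kx y ξ * f ξ)
    (Icc_mem_nhds (by linarith : x - 1 < x) (by linarith : x < x + 1)) ?_ ?_ ?_ ?_ ?_ ?_).2
  · exact Filter.Eventually.of_forall fun y =>
      (continuous_kernel_mul hk hf y).aestronglyMeasurable
  · exact (continuous_kernel_mul hk hf x).intervalIntegrable _ _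
  · exact (continuous_kernel_mul hkx hf x).aestronglyMeasurable
  · exact Filter.Eventually.of_forall fun ξ hξ y hy => hC (y, ξ) ⟨hy, uIoc_subset_uIcc hξ⟩
  · exact continuous_const.intervalIntegrable _ _
  · exact Filter.Eventually.of_forall fun ξ _ y _ => (hd y ξ).mul_const _

/-- Leibniz rule for a Volterra integral whose kernel is C¹ in its first variable. -/
lemma hasDerivAt_volt {kx : ℝ → ℝ → ℝ} (hk : Continuous (Function.uncurry k))
    (hkx : Continuous (Function.uncurry kx))
    (hd : ∀ x ξ, HasDerivAt (fun y => k y ξ) (kx x ξ) x) (hf : Continuous f) (x : ℝ) :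
    HasDerivAt (volt k f) (k x x * f x + volt kx f x) x := by
  have hc : ∀ {k' : ℝ → ℝ → ℝ}, Continuous (Function.uncurry k') →
      Continuous fun p : ℝ × ℝ => k' p.1 p.2 * f p.2 := by
    intro k' hk'
    have : Continuous fun p : ℝ × ℝ => Function.uncurry k' p * f p.2 := by fun_prop
    exact this
  have hcI : Continuous fun p : ℝ × ℝ => ∫ ξ in (0 : ℝ)..p.2, kx p.1 ξ * f ξ := by
    refine continuous_parametric_intervalIntegral_of_continuous
      (f := fun (p : ℝ × ℝ) ξ => kx p.1 ξ * f ξ) ?_ continuous_snd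
    have : Continuous fun q : (ℝ × ℝ) × ℝ => Function.uncurry kx (q.1.1, q.2) * f q.2 := by fun_prop
    exact this
  have key := hasStrictFDerivAt_uncurry_coprod (𝕜 := ℝ) (u := ((x, x) : ℝ × ℝ))
    (f := fun y z => ∫ ξ in (0 : ℝ)..z, k y ξ * f ξ)
    (f₁ := fun y z => ContinuousLinearMap.toSpanSingleton ℝ (∫ ξ in (0 : ℝ)..z, kx y ξ * f ξ))
    (f₂ := fun y z => ContinuousLinearMap.toSpanSingleton ℝ (k y z * f z))
    (Filter.Eventually.of_forall fun v => hasDerivAt_parametric hk hkx hd hf v.1 v.2)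
    (Filter.Eventually.of_forall fun v =>
      integral_hasDerivAt_right ((continuous_kernel_mul hk hf v.1).intervalIntegrable _ _)
        ((continuous_kernel_mul hk hf v.1).stronglyMeasurableAtFilter _ _)
        (continuous_kernel_mul hk hf v.1).continuousAt)
    ((ContinuousLinearMap.toSpanSingletonCLE (𝕜 := ℝ) (E := ℝ)).continuous.comp hcI).continuousAt
    ((ContinuousLinearMap.toSpanSingletonCLE (𝕜 := ℝ) (E := ℝ)).continuous.comp (hc hk)).continuousAt
  have h2 : HasDerivAt (fun y : ℝ => (y, y)) ((1 : ℝ), (1 : ℝ)) x :=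
    (hasDerivAt_id x).prodMk (hasDerivAt_id x)
  have h3 := HasFDerivAt.comp_hasDerivAt (f := fun y : ℝ => (y, y)) x key.hasFDerivAt h2
  refine HasDerivAt.congr_deriv (f := volt k f) h3 ?_
  simp [Function.HasUncurry.uncurry, volt, add_comm]

/-- Integration by parts in the integration variable of a Volterra integral. -/
lemma volt_deriv {kξ : ℝ → ℝ → ℝ} {f' : ℝ → ℝ} {L x : ℝ} (hk : Continuous (Function.uncurry k))
    (hkξ : Continuous (Function.uncurry kξ))
    (hd : ∀ x ξ, HasDerivAt (fun s => k x s) (kξ x ξ) ξ) (hf : Continuous f) (hf' : Continuous f')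
    (hff' : ∀ y ∈ Ioo 0 L, HasDerivAt f (f' y) y) (hx : x ∈ Icc 0 L) :
    volt k f' x = k x x * f x - k x 0 * f 0 - volt kξ f x := by
  have hkc : Continuous fun ξ => k x ξ := by
    have : Continuous fun ξ => Function.uncurry k (x, ξ) := by fun_prop
    exact this
  have h := integral_eq_sub_of_hasDerivAt_of_le (f := fun ξ => k x ξ * f ξ)
    (f' := fun ξ => kξ x ξ * f ξ + k x ξ * f' ξ) hx.1 (hkc.mul hf).continuousOn
    (fun y hy => (hd x y).mul (hff' y ⟨hy.1, hy.2.trans_le hx.2⟩))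
    (((continuous_kernel_mul hkξ hf x).add (hkc.mul hf')).intervalIntegrable _ _)
  rw [intervalIntegral.integral_add ((continuous_kernel_mul hkξ hf x).intervalIntegrable _ _)
    ((continuous_kernel_mul hk hf' x).intervalIntegrable _ _)] at h
  simp only [volt]
  linarith

/-- Cauchy–Schwarz inequality against the constant function `1`. -/
lemma sq_integral_le {h : ℝ → ℝ} (hh : Continuous h) {x : ℝ} (hx : 0 ≤ x) :
    (∫ ξ in (0 : ℝ)..x, h ξ) ^ 2 ≤ x * ∫ ξ in (0 : ℝ)..x, h ξ ^ 2 := by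
  rcases hx.eq_or_lt with rfl | hx
  · simp
  set I := ∫ ξ in (0 : ℝ)..x, h ξ
  have h0 : 0 ≤ ∫ ξ in (0 : ℝ)..x, (x * h ξ - I) ^ 2 :=
    integral_nonneg hx.le fun _ _ => sq_nonneg _
  have h1 : ∫ ξ in (0 : ℝ)..x, (x * h ξ - I) ^ 2
      = x ^ 2 * (∫ ξ in (0 : ℝ)..x, h ξ ^ 2) - 2 * x * I * I + x * I ^ 2 := by
    have : ∀ ξ, (x * h ξ - I) ^ 2 = x ^ 2 * h ξ ^ 2 - 2 * x * I * h ξ + I ^ 2 := fun ξ => by ring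
    simp_rw [this]
    rw [intervalIntegral.integral_add (Continuous.intervalIntegrable (by fun_prop) _ _)
      (Continuous.intervalIntegrable (by fun_prop) _ _),
      intervalIntegral.integral_sub (Continuous.intervalIntegrable (by fun_prop) _ _)
      (Continuous.intervalIntegrable (by fun_prop) _ _)]
    simp only [intervalIntegral.integral_const_mul, intervalIntegral.integral_const, smul_eq_mul,
      sub_zero]
    rfl
  rw [h1] at h0
  have h2 : 0 ≤ x * (x * (∫ ξ in (0 : ℝ)..x, h ξ ^ 2) - I ^ 2) := by nlinarith
  nlinarith [nonneg_of_mul_nonneg_right h2 hx]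

end Volt

/-! ### Weighted L² norms -/

/-- The squared weighted norm `∫₀ᴸ e^{-δx} f(x)² dx`. -/
noncomputable def wnorm (L δ : ℝ) (f : ℝ → ℝ) : ℝ :=
  ∫ x in (0 : ℝ)..L, Real.exp (-δ * x) * f x ^ 2

section Weighted

variable {L δ C : ℝ} {f g : ℝ → ℝ}

lemma wnorm_integrable (hf : Continuous f) :
    IntervalIntegrable (fun x => Real.exp (-δ * x) * f x ^ 2) volume 0 L :=
  Continuous.intervalIntegrable (by fun_prop) _ _

lemma wnorm_nonneg (hL : 0 ≤ L) : 0 ≤ wnorm L δ f :=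
  integral_nonneg hL fun x _ => by positivity

/-- A pointwise inequality between squares, integrated against the weight. -/
lemma wnorm_le_of_sq_le (hL : 0 ≤ L) {F : ℝ → ℝ} (hf : Continuous f) (hF : Continuous F)
    (h : ∀ x ∈ Icc 0 L, f x ^ 2 ≤ F x) :
    wnorm L δ f ≤ ∫ x in (0 : ℝ)..L, Real.exp (-δ * x) * F x :=
  integral_mono_on hL (wnorm_integrable hf) (Continuous.intervalIntegrable (by fun_prop) _ _)
    fun x hx => mul_le_mul_of_nonneg_left (h x hx) (Real.exp_pos _).le

/-- Parallelogram-type bound: `(f+g)² ≤ 2f² + 2g²`. -/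
lemma wnorm_le_two (hL : 0 ≤ L) {h : ℝ → ℝ} (hf : Continuous f) (hg : Continuous g)
    (hh : Continuous h) (e : ∀ x ∈ Icc 0 L, h x = f x + g x ∨ h x = f x - g x) :
    wnorm L δ h ≤ 2 * wnorm L δ f + 2 * wnorm L δ g := by
  refine (wnorm_le_of_sq_le (F := fun x => 2 * f x ^ 2 + 2 * g x ^ 2) hL hh (by fun_prop)
    fun x hx => ?_).trans_eq ?_
  · rcases e x hx with e | e <;> rw [e] <;> nlinarith [sq_nonneg (f x - g x), sq_nonneg (f x + g x)]
  · unfold wnorm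
    rw [← intervalIntegral.integral_const_mul, ← intervalIntegral.integral_const_mul,
      ← intervalIntegral.integral_add (Continuous.intervalIntegrable (by fun_prop) _ _)
      (Continuous.intervalIntegrable (by fun_prop) _ _)]
    congr 1; funext x; ring

/-- Comparison of two exponential weights. -/
lemma wnorm_le_wnorm (hL : 0 ≤ L) {δ' c : ℝ} (hf : Continuous f)
    (hc : ∀ x ∈ Icc 0 L, (δ - δ') * x ≤ c) :
    wnorm L δ' f ≤ Real.exp c * wnorm L δ f := by
  unfold wnorm
  rw [← intervalIntegral.integral_const_mul]
  refine integral_mono_on hL (wnorm_integrable hf)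
    (Continuous.intervalIntegrable (by fun_prop) _ _) fun x hx => ?_
  have h1 : Real.exp (-δ' * x) = Real.exp ((δ - δ') * x) * Real.exp (-δ * x) := by
    rw [← Real.exp_add]; ring_nf
  rw [h1, mul_assoc]
  exact mul_le_mul_of_nonneg_right (Real.exp_le_exp.2 (hc x hx)) (by positivity)

/-- In the norm with weight `e^{-δx}` a Volterra operator has squared norm `O(1/δ)`; this is what
makes the nonlocal terms harmless for large `δ`. -/
lemma wnorm_volt_le (hL : 0 ≤ L) (hδ : 0 < δ) {k : ℝ → ℝ → ℝ} (hk : Continuous (Function.uncurry k))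
    (hC : ∀ x ∈ Icc 0 L, ∀ ξ ∈ Icc 0 L, |k x ξ| ≤ C) (hf : Continuous f) :
    wnorm L δ (volt k f) ≤ C ^ 2 * L / δ * wnorm L δ f := by
  set H : ℝ → ℝ := fun x => ∫ ξ in (0 : ℝ)..x, f ξ ^ 2
  have hf2 : Continuous fun ξ => f ξ ^ 2 := by fun_prop
  have hHd : ∀ x, HasDerivAt H (f x ^ 2) x := fun x =>
    integral_hasDerivAt_right (hf2.intervalIntegrable _ _) (hf2.stronglyMeasurableAtFilter _ _)
      hf2.continuousAt
  have hHc : Continuous H := continuous_iff_continuousAt.2 fun x => (hHd x).continuousAt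
  have hH0 : ∀ x ∈ Icc 0 L, 0 ≤ H x := fun x hx => integral_nonneg hx.1 fun _ _ => sq_nonneg _
  have h1 : ∀ x ∈ Icc 0 L, volt k f x ^ 2 ≤ C ^ 2 * L * H x := by
    intro x hx
    have e1 := sq_integral_le (continuous_kernel_mul hk hf x) hx.1
    have e2 : ∫ ξ in (0 : ℝ)..x, (k x ξ * f ξ) ^ 2 ≤ ∫ ξ in (0 : ℝ)..x, C ^ 2 * f ξ ^ 2 := by
      refine integral_mono_on hx.1
        (((continuous_kernel_mul hk hf x).pow 2).intervalIntegrable _ _)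
        (Continuous.intervalIntegrable (by fun_prop) _ _) fun ξ hξ => ?_
      rw [mul_pow]
      refine mul_le_mul_of_nonneg_right ?_ (sq_nonneg _)
      exact sq_le_sq' (abs_le.1 (hC x hx ξ ⟨hξ.1, hξ.2.trans hx.2⟩)).1
        (abs_le.1 (hC x hx ξ ⟨hξ.1, hξ.2.trans hx.2⟩)).2
    rw [intervalIntegral.integral_const_mul] at e2
    have e3 : x * ∫ ξ in (0 : ℝ)..x, (k x ξ * f ξ) ^ 2 ≤ L * (C ^ 2 * H x) :=
      mul_le_mul hx.2 e2 (integral_nonneg hx.1 fun _ _ => sq_nonneg _) hL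
    unfold volt
    nlinarith
  -- integration by parts: `∫ δ e^{-δx} H = ∫ e^{-δx} H' - e^{-δL} H(L)`
  have h2 : δ * ∫ x in (0 : ℝ)..L, Real.exp (-δ * x) * H x ≤ wnorm L δ f := by
    have hd : ∀ x, HasDerivAt (fun x => Real.exp (-δ * x) * H x)
        (Real.exp (-δ * x) * f x ^ 2 - δ * (Real.exp (-δ * x) * H x)) x := by
      intro x
      have := (((hasDerivAt_id x).const_mul (-δ)).exp).mul (hHd x)
      refine this.congr_deriv ?_
      simp; ring
    have e := integral_eq_sub_of_hasDerivAt (fun x _ => hd x)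
      (Continuous.intervalIntegrable (by fun_prop) 0 L)
    rw [intervalIntegral.integral_sub (wnorm_integrable hf)
      (Continuous.intervalIntegrable (by fun_prop) _ _), intervalIntegral.integral_const_mul] at e
    have e0 : H 0 = 0 := by simp [H]
    have e1 : 0 ≤ Real.exp (-δ * L) * H L :=
      mul_nonneg (Real.exp_pos _).le (hH0 L ⟨hL, le_rfl⟩)
    rw [e0] at e
    unfold wnorm
    linarith
  have h3 := wnorm_le_of_sq_le (δ := δ) hL (continuous_volt hk hf)
    (by fun_prop : Continuous fun x => C ^ 2 * L * H x) h1
  have h4 : ∫ x in (0 : ℝ)..L, Real.exp (-δ * x) * (C ^ 2 * L * H x)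
      = C ^ 2 * L * ∫ x in (0 : ℝ)..L, Real.exp (-δ * x) * H x := by
    rw [← intervalIntegral.integral_const_mul]; congr 1; funext x; ring
  rw [h4] at h3
  refine h3.trans ?_
  have : C ^ 2 * L / δ * wnorm L δ f = C ^ 2 * L * (wnorm L δ f / δ) := by ring
  rw [this]
  refine mul_le_mul_of_nonneg_left ?_ (by positivity)
  rw [le_div_iff₀ hδ]; linarith

/-- Integration by parts for `∫ e^{-δx} 2 f f'`. -/
lemma wnorm_parts {f' : ℝ → ℝ} (hL : 0 ≤ L) (hf : Continuous f) (hf' : Continuous f')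
    (hd : ∀ x ∈ Ioo 0 L, HasDerivAt f (f' x) x) :
    ∫ x in (0 : ℝ)..L, Real.exp (-δ * x) * (2 * f x * f' x)
      = Real.exp (-δ * L) * f L ^ 2 - f 0 ^ 2 + δ * wnorm L δ f := by
  have e := integral_eq_sub_of_hasDerivAt_of_le (f := fun x => Real.exp (-δ * x) * f x ^ 2)
    (f' := fun x => Real.exp (-δ * x) * (2 * f x * f' x) - δ * (Real.exp (-δ * x) * f x ^ 2)) hL
    (Continuous.continuousOn (by fun_prop)) (fun x hx => ?_)
    (Continuous.intervalIntegrable (by fun_prop) _ _)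
  · rw [intervalIntegral.integral_sub (Continuous.intervalIntegrable (by fun_prop) _ _)
      (Continuous.intervalIntegrable (by fun_prop) _ _), intervalIntegral.integral_const_mul] at e
    simp at e
    unfold wnorm
    simp
    linarith
  · have := (((hasDerivAt_id x).const_mul (-δ)).exp).mul ((hd x hx).pow 2)
    refine this.congr_deriv ?_
    simp; ring

end Weighted

/-! ### Continuous functions on `[0,L]` and invertibility of `1 + V` -/

section Space

variable {L : ℝ}

/-- Extension of a continuous function on `[0,L]` to `ℝ`, constant outside of `[0,L]`. -/
noncomputable def ext (hL : 0 ≤ L) (f : C(Icc (0 : ℝ) L, ℝ)) : ℝ → ℝ := IccExtend hL f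

lemma continuous_ext (hL : 0 ≤ L) (f : C(Icc (0 : ℝ) L, ℝ)) : Continuous (ext hL f) :=
  f.continuous.Icc_extend'

lemma ext_apply (hL : 0 ≤ L) (f : C(Icc (0 : ℝ) L, ℝ)) {x : ℝ} (hx : x ∈ Icc 0 L) :
    ext hL f x = f ⟨x, hx⟩ := IccExtend_of_mem hL f hx

lemma abs_ext_le (hL : 0 ≤ L) (f : C(Icc (0 : ℝ) L, ℝ)) (x : ℝ) : |ext hL f x| ≤ ‖f‖ :=
  f.norm_coe_le_norm (projIcc 0 L hL x)

/-- The restriction of a continuous function to `[0,L]`. -/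
def res (L : ℝ) (f : ℝ → ℝ) (hf : Continuous f) : C(Icc (0 : ℝ) L, ℝ) :=
  ⟨fun x => f x, hf.comp continuous_subtype_val⟩

/-- The Volterra operator with kernel `k` on `C([0,L])`. -/
noncomputable def voltX (hL : 0 ≤ L) (k : ℝ → ℝ → ℝ) (hk : Continuous (Function.uncurry k)) :
    C(Icc (0 : ℝ) L, ℝ) →L[ℝ] C(Icc (0 : ℝ) L, ℝ) :=
  LinearMap.mkContinuousOfExistsBound
    { toFun := fun f => res L (volt k (ext hL f)) (continuous_volt hk (continuous_ext hL f))
      map_add' := fun f g => by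
        ext x
        simp only [res, volt, ContinuousMap.coe_mk, ContinuousMap.add_apply]
        rw [← intervalIntegral.integral_add
          ((continuous_kernel_mul hk (continuous_ext hL f) x).intervalIntegrable _ _)
          ((continuous_kernel_mul hk (continuous_ext hL g) x).intervalIntegrable _ _)]
        congr 1; funext ξ
        exact mul_add _ _ _
      map_smul' := fun c f => by
        ext x
        simp only [res, volt, ContinuousMap.coe_mk, ContinuousMap.smul_apply, RingHom.id_apply,
          smul_eq_mul]
        rw [← intervalIntegral.integral_const_mul]
        congr 1; funext ξ
        exact mul_left_comm _ _ _ }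
    (by
      obtain ⟨C, hC0, hC⟩ := exists_bound_square hk L
      refine ⟨C * L, fun f => (ContinuousMap.norm_le _ (by positivity)).2 fun x => ?_⟩
      have : ∀ ξ ∈ uIoc (0 : ℝ) x, ‖k x ξ * ext hL f ξ‖ ≤ C * ‖f‖ := by
        intro ξ hξ
        rw [uIoc_of_le x.2.1] at hξ
        rw [norm_mul]
        exact mul_le_mul (hC x x.2 ξ ⟨hξ.1.le, hξ.2.trans x.2.2⟩) (abs_ext_le hL f ξ)
          (norm_nonneg _) hC0
      refine (norm_integral_le_of_norm_le_const this).trans ?_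
      rw [sub_zero, abs_of_nonneg x.2.1]
      have := mul_le_mul_of_nonneg_left x.2.2 (by positivity : 0 ≤ C * ‖f‖)
      linarith)

lemma voltX_apply (hL : 0 ≤ L) {k : ℝ → ℝ → ℝ} (hk : Continuous (Function.uncurry k))
    (f : C(Icc (0 : ℝ) L, ℝ)) (x : Icc (0 : ℝ) L) :
    voltX hL k hk f x = volt k (ext hL f) x := rfl

/-- The factorial decay of iterated Volterra operators. -/
lemma abs_voltX_pow_le (hL : 0 ≤ L) {k : ℝ → ℝ → ℝ} (hk : Continuous (Function.uncurry k)) {C : ℝ}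
    (hC0 : 0 ≤ C) (hC : ∀ x ∈ Icc 0 L, ∀ ξ ∈ Icc 0 L, |k x ξ| ≤ C) (f : C(Icc (0 : ℝ) L, ℝ))
    (n : ℕ) (x : Icc (0 : ℝ) L) :
    |(voltX hL k hk ^ n) f x| ≤ (C * x) ^ n / n.factorial * ‖f‖ := by
  induction n generalizing x with
  | zero => simpa using f.norm_coe_le_norm x
  | succ n ih =>
    rw [pow_succ', mul_apply_eq_comp, voltX_apply]
    have h1 : ∀ ξ ∈ Ioc (0 : ℝ) x, ‖k x ξ * ext hL ((voltX hL k hk ^ n) f) ξ‖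
        ≤ C * (C ^ n / n.factorial * ‖f‖) * ξ ^ n := by
      intro ξ hξ
      have hξ' : ξ ∈ Icc 0 L := ⟨hξ.1.le, hξ.2.trans x.2.2⟩
      rw [norm_mul, ext_apply hL _ hξ', mul_assoc]
      refine mul_le_mul (hC x x.2 ξ hξ') ((ih ⟨ξ, hξ'⟩).trans_eq ?_) (norm_nonneg _) hC0
      simp only [mul_pow]; ring
    have h2 := norm_integral_le_of_norm_le (μ := volume) x.2.1
      (Filter.Eventually.of_forall h1) (Continuous.intervalIntegrable (by fun_prop) _ _)
    rw [intervalIntegral.integral_const_mul, integral_pow] at h2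
    refine h2.trans_eq ?_
    rw [Nat.factorial_succ]
    push_cast
    have : ((n : ℝ) + 1) ≠ 0 := by positivity
    have : (n.factorial : ℝ) ≠ 0 := by positivity
    field_simp
    ring

/-- A Volterra operator is quasinilpotent, hence `1 + V` is invertible. -/
lemma isUnit_one_add_voltX (hL : 0 ≤ L) {k : ℝ → ℝ → ℝ} (hk : Continuous (Function.uncurry k)) :
    IsUnit (1 + voltX hL k hk) := by
  obtain ⟨C, hC0, hC⟩ := exists_bound_square hk L
  have h0 := FloorSemiring.tendsto_pow_div_factorial_atTop (C * L)
  obtain ⟨n, hn⟩ := (h0.eventually (gt_mem_nhds (zero_lt_one' ℝ))).exists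
  set V := voltX hL k hk
  have hV : ‖(-V) ^ n‖ < 1 := by
    refine lt_of_le_of_lt (ContinuousLinearMap.opNorm_le_bound _ (by positivity) fun f => ?_) hn
    refine (ContinuousMap.norm_le _ (by positivity)).2 fun x => ?_
    have e : |((-V) ^ n) f x| = |(V ^ n) f x| := by
      rcases n.even_or_odd with h | h
      · have e : (-V) ^ n = V ^ n := h.neg_pow V
        rw [e]
      · have e : (-V) ^ n = -V ^ n := h.neg_pow V
        rw [e]; exact abs_neg _
    rw [Real.norm_eq_abs, e]
    refine (abs_voltX_pow_le hL hk hC0 hC f n x).trans ?_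
    have := x.2.1
    have := x.2.2
    gcongr
  have h1 := isUnit_one_sub_of_norm_lt_one
    (R := C(Icc (0 : ℝ) L, ℝ) →L[ℝ] C(Icc (0 : ℝ) L, ℝ)) hV
  rw [← mul_neg_geom_sum] at h1
  have hcomm : Commute (1 - -V) (∑ i ∈ Finset.range n, (-V) ^ i) := by
    show _ * _ = _ * _
    rw [mul_neg_geom_sum, geom_sum_mul_neg]
  have := (hcomm.isUnit_mul_iff.1 h1).1
  rwa [sub_neg_eq_add] at this

/-- A C¹ curve in `C([0,L])` is transformed into a C¹ curve by the inverse of `1 + V`. -/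
lemma exists_volterra_curve (hL : 0 ≤ L) {k : ℝ → ℝ → ℝ} (hk : Continuous (Function.uncurry k))
    {g gt : ℝ → C(Icc (0 : ℝ) L, ℝ)} (hg : ∀ t, HasDerivAt g (gt t) t) :
    ∃ b bt : ℝ → C(Icc (0 : ℝ) L, ℝ), (∀ t, HasDerivAt b (bt t) t) ∧
      (∀ t, b t + voltX hL k hk (b t) = g t) ∧ ∀ t, bt t + voltX hL k hk (bt t) = gt t := by
  obtain ⟨K, hK⟩ := isUnit_one_add_voltX hL hk
  have hinv : ∀ f, (↑K⁻¹ : C(Icc (0 : ℝ) L, ℝ) →L[ℝ] C(Icc (0 : ℝ) L, ℝ)) f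
      + voltX hL k hk ((↑K⁻¹ : C(Icc (0 : ℝ) L, ℝ) →L[ℝ] C(Icc (0 : ℝ) L, ℝ)) f) = f := by
    intro f
    have := congrArg (fun T : C(Icc (0 : ℝ) L, ℝ) →L[ℝ] C(Icc (0 : ℝ) L, ℝ) => T f) K.mul_inv
    rw [hK] at this
    simpa using this
  exact ⟨fun t => (↑K⁻¹ : C(Icc (0 : ℝ) L, ℝ) →L[ℝ] C(Icc (0 : ℝ) L, ℝ)) (g t),
    fun t => (↑K⁻¹ : C(Icc (0 : ℝ) L, ℝ) →L[ℝ] C(Icc (0 : ℝ) L, ℝ)) (gt t),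
    fun t => (ContinuousLinearMap.hasFDerivAt _).comp_hasDerivAt t (hg t),
    fun t => hinv _, fun t => hinv _⟩

/-- The curve `t ↦ w(t,·)` in `C([0,L])`. -/
def curveX (L : ℝ) (w : ℝ → ℝ → ℝ) (hw : Continuous (Function.uncurry w)) (t : ℝ) :
    C(Icc (0 : ℝ) L, ℝ) :=
  res L (w t) (hw.comp (Continuous.prodMk_right t))

lemma continuous_curveX {w : ℝ → ℝ → ℝ} (hw : Continuous (Function.uncurry w)) :
    Continuous (curveX L w hw) := by
  refine ContinuousMap.continuous_of_continuous_uncurry _ ?_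
  exact hw.comp (continuous_fst.prodMk (continuous_subtype_val.comp continuous_snd))

lemma hasDerivAt_curveX {w wt : ℝ → ℝ → ℝ} (hw : Continuous (Function.uncurry w))
    (hwt : Continuous (Function.uncurry wt))
    (hd : ∀ t x, HasDerivAt (fun τ => w τ x) (wt t x) t) (t : ℝ) :
    HasDerivAt (curveX L w hw) (curveX L wt hwt t) t := by
  have hc := continuous_curveX (L := L) hwt
  have e : curveX L w hw = fun t => curveX L w hw 0 + ∫ s in (0 : ℝ)..t, curveX L wt hwt s := by
    funext t
    ext x
    have h1 := (ContinuousMap.evalCLM ℝ x).intervalIntegral_comp_comm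
      (hc.intervalIntegrable (μ := volume) 0 t)
    have h2 := integral_eq_sub_of_hasDerivAt (a := 0) (b := t) (fun s _ => hd s x)
      (((hwt.comp (Continuous.prodMk_left (x : ℝ)))).intervalIntegrable _ _)
    have h3 : ∀ s, (ContinuousMap.evalCLM ℝ x) (curveX L wt hwt s) = wt s x := fun s => rfl
    simp only [h3] at h1
    have h4 : (∫ s in (0 : ℝ)..t, curveX L wt hwt s) x = w t x - w 0 x := by
      rw [← h2]; exact h1.symm
    rw [ContinuousMap.add_apply, h4]
    show w t x = w 0 x + _
    ring
  rw [e]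
  exact (integral_hasDerivAt_right (hc.intervalIntegrable _ _)
    (hc.stronglyMeasurableAtFilter _ _) hc.continuousAt).const_add _

/-- Integration against a continuous weight as a continuous functional on `C([0,L])`. -/
noncomputable def intX (hL : 0 ≤ L) (φ : ℝ → ℝ) (hφ : Continuous φ) : C(Icc (0 : ℝ) L, ℝ) →L[ℝ] ℝ :=
  LinearMap.mkContinuousOfExistsBound
    { toFun := fun f => ∫ x in (0 : ℝ)..L, φ x * ext hL f x
      map_add' := fun f g => by
        have h : ∀ f, IntervalIntegrable (fun x => φ x * ext hL f x) volume 0 L := fun f =>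
          (hφ.mul (continuous_ext hL f)).intervalIntegrable _ _
        rw [← intervalIntegral.integral_add (h f) (h g)]
        congr 1; funext ξ
        exact mul_add _ _ _
      map_smul' := fun c f => by
        simp only [RingHom.id_apply, smul_eq_mul]
        rw [← intervalIntegral.integral_const_mul]
        congr 1; funext ξ
        exact mul_left_comm _ _ _ }
    (by
      obtain ⟨C, hC⟩ := (isCompact_Icc : IsCompact (Icc 0 L)).exists_bound_of_continuousOn
        hφ.continuousOn
      refine ⟨C * L, fun f => ?_⟩
      have : ∀ ξ ∈ uIoc (0 : ℝ) L, ‖φ ξ * ext hL f ξ‖ ≤ C * ‖f‖ := by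
        intro ξ hξ
        rw [uIoc_of_le hL] at hξ
        rw [norm_mul]
        have h1 := hC ξ ⟨hξ.1.le, hξ.2⟩
        exact mul_le_mul h1 (abs_ext_le hL f ξ) (norm_nonneg _) ((norm_nonneg _).trans h1)
      refine (norm_integral_le_of_norm_le_const this).trans_eq ?_
      rw [sub_zero, abs_of_nonneg hL]
      ring)

/-- Time derivative of a weighted energy along a C¹ curve in `C([0,L])`. -/
lemma hasDerivAt_wnorm (hL : 0 ≤ L) {δ : ℝ} {A : ℝ → C(Icc (0 : ℝ) L, ℝ)}
    {A' : C(Icc (0 : ℝ) L, ℝ)} {t : ℝ} (hA : HasDerivAt A A' t) :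
    HasDerivAt (fun t => wnorm L δ (ext hL (A t)))
      (∫ x in (0 : ℝ)..L, Real.exp (-δ * x) * (2 * ext hL (A t) x * ext hL A' x)) t := by
  have h := (intX hL (fun x => Real.exp (-δ * x)) (by fun_prop)).hasFDerivAt.comp_hasDerivAt t
    (hA.mul hA)
  have e : (fun t => wnorm L δ (ext hL (A t)))
      = (intX hL (fun x => Real.exp (-δ * x)) (by fun_prop)) ∘ (A * A) := by
    funext s
    unfold wnorm
    refine intervalIntegral.integral_congr fun x _ => ?_
    show _ * (ext hL (A s) x) ^ 2 = _ * (ext hL (A s) x * ext hL (A s) x)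
    ring
  rw [e]
  refine h.congr_deriv (intervalIntegral.integral_congr fun x _ => ?_)
  show _ * (ext hL A' x * ext hL (A t) x + ext hL (A t) x * ext hL A' x) = _
  ring

end Space

/-! ### The Lyapunov functional of the target system -/

section Lyapunov

variable {L δ C : ℝ}

/-- Weighted bound for the inverse of `1 + V`. -/
lemma wnorm_le_of_volterra (hL : 0 ≤ L) (hδ : 0 < δ) (hδC : 4 * C ^ 2 * L ≤ δ) {k : ℝ → ℝ → ℝ}
    (hk : Continuous (Function.uncurry k)) (hC : ∀ x ∈ Icc 0 L, ∀ ξ ∈ Icc 0 L, |k x ξ| ≤ C)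
    {f G : ℝ → ℝ} (hf : Continuous f) (hG : Continuous G)
    (e : ∀ x ∈ Icc 0 L, f x + volt k f x = G x) : wnorm L δ f ≤ 4 * wnorm L δ G := by
  have h1 := wnorm_le_two (δ := δ) hL hG (continuous_volt hk hf) hf
    fun x hx => Or.inr (by linarith [e x hx])
  have h2 := wnorm_volt_le hL hδ hk hC hf
  have h3 : C ^ 2 * L / δ * wnorm L δ f ≤ 1 / 4 * wnorm L δ f := by
    refine mul_le_mul_of_nonneg_right ?_ (wnorm_nonneg hL)
    rw [div_le_iff₀ hδ]; linarith
  linarith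

lemma wnorm_volt_le_quarter (hL : 0 ≤ L) (hδ : 0 < δ) (hδC : 4 * C ^ 2 * L ≤ δ) {k : ℝ → ℝ → ℝ}
    (hk : Continuous (Function.uncurry k)) (hC : ∀ x ∈ Icc 0 L, ∀ ξ ∈ Icc 0 L, |k x ξ| ≤ C)
    {f : ℝ → ℝ} (hf : Continuous f) : wnorm L δ (volt k f) ≤ 1 / 4 * wnorm L δ f := by
  refine (wnorm_volt_le hL hδ hk hC hf).trans (mul_le_mul_of_nonneg_right ?_ (wnorm_nonneg hL))
  rw [div_le_iff₀ hδ]; linarith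

/-- The nonlocal source `R` of the target system is controlled by the transport components. -/
lemma wnorm_source_le (hL : 0 ≤ L) (hδ : 0 < δ) (hδC : 4 * C ^ 2 * L ≤ δ) {k : ℝ → ℝ → ℝ}
    (hk : Continuous (Function.uncurry k)) (hC : ∀ x ∈ Icc 0 L, ∀ ξ ∈ Icc 0 L, |k x ξ| ≤ C)
    {θ a : Fin 3 → ℝ → ℝ} {Θ : ℝ} (hΘ : ∀ j, ∀ x ∈ Icc 0 L, |θ j x| ≤ Θ) {R : ℝ → ℝ}
    (ha : ∀ i, Continuous (a i)) (hR : Continuous R)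
    (e : ∀ x ∈ Icc 0 L, R x + volt k R x = ∑ j, θ j x * a j x) :
    wnorm L δ R ≤ 12 * Θ ^ 2 * ∑ j, wnorm L δ (a j) := by
  have hG : Continuous fun x => R x + volt k R x := hR.add (continuous_volt hk hR)
  have h1 := wnorm_le_of_volterra hL hδ hδC hk hC hR hG fun x _ => rfl
  have hc : Continuous fun x => 3 * Θ ^ 2 * ∑ j, a j x ^ 2 := by fun_prop
  have h2 := wnorm_le_of_sq_le (δ := δ) hL hG hc fun x hx => by
    have hsq : ∀ j, (θ j x * a j x) ^ 2 ≤ Θ ^ 2 * a j x ^ 2 := fun j => by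
      rw [mul_pow]
      exact mul_le_mul_of_nonneg_right
        (sq_le_sq' (abs_le.1 (hΘ j x hx)).1 (abs_le.1 (hΘ j x hx)).2) (sq_nonneg _)
    have h0 := hsq 0
    have h1 := hsq 1
    have h2 := hsq 2
    rw [e x hx]
    simp only [Fin.sum_univ_three]
    nlinarith [sq_nonneg (θ 0 x * a 0 x - θ 1 x * a 1 x), sq_nonneg (θ 0 x * a 0 x - θ 2 x * a 2 x),
      sq_nonneg (θ 1 x * a 1 x - θ 2 x * a 2 x)]
  have h3 : ∫ x in (0 : ℝ)..L, Real.exp (-δ * x) * (3 * Θ ^ 2 * ∑ j, a j x ^ 2)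
      = 3 * Θ ^ 2 * ∑ j, wnorm L δ (a j) := by
    unfold wnorm
    rw [← intervalIntegral.integral_finsetSum fun j _ => wnorm_integrable (ha j),
      ← intervalIntegral.integral_const_mul]
    congr 1; funext x
    rw [← Finset.mul_sum]; ring
  rw [h3] at h2
  linarith

/-- Energy estimate for one rightward transport component. -/
lemma transport_energy_le (hL : 0 ≤ L) {γ g s : ℝ} (hgγ : g ≤ γ) (hδ : 0 < δ)
    {c : Fin 3 → ℝ} (hs : ∀ j, |c j| ≤ s) {a : Fin 3 → ℝ → ℝ} {ax at' v : ℝ → ℝ} (i : Fin 3)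
    (ha : ∀ i, Continuous (a i)) (hax : Continuous ax) (hat : Continuous at') (hv : Continuous v)
    (hd : ∀ x ∈ Ioo 0 L, HasDerivAt (a i) (ax x) x) (h0 : a i 0 = 0)
    (e : ∀ x ∈ Icc 0 L, at' x + γ * ax x = (∑ j, c j * a j x) - v x) :
    ∫ x in (0 : ℝ)..L, Real.exp (-δ * x) * (2 * a i x * at' x)
      ≤ -(g * (Real.exp (-δ * L) * a i L ^ 2)) - g * δ * wnorm L δ (a i)
        + (3 * s + 1) * wnorm L δ (a i) + s * (∑ j, wnorm L δ (a j)) + wnorm L δ v := by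
  have hp := wnorm_parts (δ := δ) hL (ha i) hax hd
  have hai := ha i
  have h1 : ∫ x in (0 : ℝ)..L, Real.exp (-δ * x) * (2 * a i x * at' x)
      ≤ ∫ x in (0 : ℝ)..L, (-γ * (Real.exp (-δ * x) * (2 * a i x * ax x))
        + (3 * s + 1) * (Real.exp (-δ * x) * a i x ^ 2)
        + s * (∑ j, Real.exp (-δ * x) * a j x ^ 2) + Real.exp (-δ * x) * v x ^ 2) := by
    refine integral_mono_on hL (Continuous.intervalIntegrable (by fun_prop) _ _)
      (Continuous.intervalIntegrable (by fun_prop) _ _) fun x hx => ?_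
    have e1 : at' x = (∑ j, c j * a j x) - v x - γ * ax x := by linarith [e x hx]
    have e2 : ∀ j, 2 * a i x * (c j * a j x) ≤ s * (a i x ^ 2 + a j x ^ 2) := by
      intro j
      have h3 := abs_le.1 (hs j)
      nlinarith [mul_nonneg (by linarith : 0 ≤ s - c j) (sq_nonneg (a i x + a j x)),
        mul_nonneg (by linarith : 0 ≤ s + c j) (sq_nonneg (a i x - a j x))]
    have e3 : 2 * a i x * at' x ≤ -γ * (2 * a i x * ax x) + (3 * s + 1) * a i x ^ 2
        + s * (∑ j, a j x ^ 2) + v x ^ 2 := by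
      rw [e1]
      have h0 := e2 0
      have h1 := e2 1
      have h2 := e2 2
      simp only [Fin.sum_univ_three]
      nlinarith [sq_nonneg (a i x + v x)]
    rw [← Finset.mul_sum]
    calc _ ≤ _ := mul_le_mul_of_nonneg_left e3 (Real.exp_pos (-δ * x)).le
      _ = _ := by ring
  have h2 : ∫ x in (0 : ℝ)..L, (-γ * (Real.exp (-δ * x) * (2 * a i x * ax x))
        + (3 * s + 1) * (Real.exp (-δ * x) * a i x ^ 2)
        + s * (∑ j, Real.exp (-δ * x) * a j x ^ 2) + Real.exp (-δ * x) * v x ^ 2)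
      = -γ * (∫ x in (0 : ℝ)..L, Real.exp (-δ * x) * (2 * a i x * ax x))
        + (3 * s + 1) * wnorm L δ (a i) + s * (∑ j, wnorm L δ (a j)) + wnorm L δ v := by
    unfold wnorm
    rw [← intervalIntegral.integral_finsetSum fun j _ => wnorm_integrable (ha j),
      ← intervalIntegral.integral_const_mul, ← intervalIntegral.integral_const_mul,
      ← intervalIntegral.integral_const_mul, ← intervalIntegral.integral_add,
      ← intervalIntegral.integral_add, ← intervalIntegral.integral_add]
    all_goals exact Continuous.intervalIntegrable (by fun_prop) _ _
  rw [h2, hp, h0] at h1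
  have h3 : g * (Real.exp (-δ * L) * a i L ^ 2 + δ * wnorm L δ (a i))
      ≤ γ * (Real.exp (-δ * L) * a i L ^ 2 + δ * wnorm L δ (a i)) := by
    have := wnorm_nonneg (δ := δ) (f := a i) hL
    exact mul_le_mul_of_nonneg_right hgγ (by positivity)
  nlinarith

/-- Energy estimate for the leftward transport component, with the increasing weight `eˣ`. -/
lemma counter_energy_le (hL : 0 ≤ L) {μ : ℝ} (hμ : 0 < μ) {b bx bt R : ℝ → ℝ}
    (hb : Continuous b) (hbx : Continuous bx) (hbt : Continuous bt) (hR : Continuous R)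
    (hd : ∀ x ∈ Ioo 0 L, HasDerivAt b (bx x) x)
    (e : ∀ x ∈ Icc 0 L, bt x = μ * bx x + R x) :
    ∫ x in (0 : ℝ)..L, Real.exp (-(-1) * x) * (2 * b x * bt x)
      ≤ μ * (Real.exp L * b L ^ 2) - μ / 2 * wnorm L (-1) b + 2 / μ * wnorm L (-1) R := by
  have hp := wnorm_parts (δ := -1) hL hb hbx hd
  have h1 : ∫ x in (0 : ℝ)..L, Real.exp (-(-1) * x) * (2 * b x * bt x)
      ≤ ∫ x in (0 : ℝ)..L, (μ * (Real.exp (-(-1) * x) * (2 * b x * bx x))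
        + μ / 2 * (Real.exp (-(-1) * x) * b x ^ 2) + 2 / μ * (Real.exp (-(-1) * x) * R x ^ 2)) := by
    refine integral_mono_on hL (Continuous.intervalIntegrable (by fun_prop) _ _)
      (Continuous.intervalIntegrable (by fun_prop) _ _) fun x hx => ?_
    have e2 : 2 * b x * R x ≤ μ / 2 * b x ^ 2 + 2 / μ * R x ^ 2 := by
      have : μ / 2 * b x ^ 2 + 2 / μ * R x ^ 2 - 2 * b x * R x
          = (μ * b x - 2 * R x) ^ 2 / (2 * μ) := by
        field_simp; ring
      have : 0 ≤ (μ * b x - 2 * R x) ^ 2 / (2 * μ) := by positivity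
      linarith
    have e3 : 2 * b x * bt x ≤ μ * (2 * b x * bx x) + μ / 2 * b x ^ 2 + 2 / μ * R x ^ 2 := by
      rw [e x hx]; linarith
    calc _ ≤ _ := mul_le_mul_of_nonneg_left e3 (Real.exp_pos (-(-1) * x)).le
      _ = _ := by ring
  have h2 : ∫ x in (0 : ℝ)..L, (μ * (Real.exp (-(-1) * x) * (2 * b x * bx x))
        + μ / 2 * (Real.exp (-(-1) * x) * b x ^ 2) + 2 / μ * (Real.exp (-(-1) * x) * R x ^ 2))
      = μ * (∫ x in (0 : ℝ)..L, Real.exp (-(-1) * x) * (2 * b x * bx x))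
        + μ / 2 * wnorm L (-1) b + 2 / μ * wnorm L (-1) R := by
    unfold wnorm
    rw [← intervalIntegral.integral_const_mul, ← intervalIntegral.integral_const_mul,
      ← intervalIntegral.integral_const_mul, ← intervalIntegral.integral_add,
      ← intervalIntegral.integral_add]
    all_goals exact Continuous.intervalIntegrable (by fun_prop) _ _
  rw [h2, hp] at h1
  have h3 : Real.exp (-(-1) * L) = Real.exp L := by norm_num
  rw [h3] at h1
  nlinarith [mul_nonneg hμ.le (sq_nonneg (b 0))]

/-- Dissipation of `κ ∑ ‖aᵢ‖²_δ + ‖b‖²_{-1}` along the target system, at a fixed time. A large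
`δ` absorbs the coupling and the nonlocal terms; a large `κ` absorbs the boundary value `b(L)` and
the source `R`. -/
lemma lyapunov_dissipation (hL : 0 ≤ L) {γ : Fin 3 → ℝ} {μ g s Θ κ ρ₁ ρ₂ : ℝ}
    (hg : 0 < g) (hgγ : ∀ i, g ≤ γ i) (hμ : 0 < μ) (hδ : 0 < δ) (hδC : 4 * C ^ 2 * L ≤ δ)
    {σ : Fin 3 → Fin 3 → ℝ} (hs : ∀ i j, |σ i j| ≤ s)
    (hδg : 6 * s + 2 + 9 * Θ ^ 2 ≤ g * δ)
    (hκ0 : 0 < κ)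
    (hκ1 : μ * Real.exp L * (ρ₁ ^ 2 + ρ₂ ^ 2) ≤ κ * (g * Real.exp (-δ * L)))
    (hκ2 : 2 * (2 / μ * (Real.exp ((δ + 1) * L) * (12 * Θ ^ 2))) ≤ κ)
    {m : Fin 3 → ℝ → ℝ → ℝ} {m₄ : ℝ → ℝ → ℝ} (hm : ∀ i, Continuous (Function.uncurry (m i)))
    (hm₄ : Continuous (Function.uncurry m₄))
    (hC : ∀ i, ∀ x ∈ Icc 0 L, ∀ ξ ∈ Icc 0 L, |m i x ξ| ≤ C)
    (hC₄ : ∀ x ∈ Icc 0 L, ∀ ξ ∈ Icc 0 L, |m₄ x ξ| ≤ C)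
    {θ : Fin 3 → ℝ → ℝ} (hΘ : ∀ j, ∀ x ∈ Icc 0 L, |θ j x| ≤ Θ)
    {a ax at' : Fin 3 → ℝ → ℝ} {b bx bt R : ℝ → ℝ}
    (ha : ∀ i, Continuous (a i)) (hax : ∀ i, Continuous (ax i)) (hat : ∀ i, Continuous (at' i))
    (hb : Continuous b) (hbx : Continuous bx) (hbt : Continuous bt) (hR : Continuous R)
    (hda : ∀ i, ∀ x ∈ Ioo 0 L, HasDerivAt (a i) (ax i x) x)
    (hdb : ∀ x ∈ Ioo 0 L, HasDerivAt b (bx x) x)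
    (ea : ∀ i, ∀ x ∈ Icc 0 L, at' i x + γ i * ax i x = (∑ j, σ i j * a j x) - volt (m i) R x)
    (eb : ∀ x ∈ Icc 0 L, bt x = μ * bx x + R x)
    (eR : ∀ x ∈ Icc 0 L, R x + volt m₄ R x = ∑ j, θ j x * a j x)
    (ha0 : ∀ i, a i 0 = 0) (hbL : b L = ρ₁ * a 0 L + ρ₂ * a 1 L) :
    κ * (∑ i, ∫ x in (0 : ℝ)..L, Real.exp (-δ * x) * (2 * a i x * at' i x))
      + ∫ x in (0 : ℝ)..L, Real.exp (-(-1) * x) * (2 * b x * bt x)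
      ≤ -min (1 / 2) (μ / 2) * (κ * (∑ i, wnorm L δ (a i)) + wnorm L (-1) b) := by
  have hN := fun i => wnorm_nonneg (δ := δ) (f := a i) hL
  have hQ := wnorm_nonneg (δ := -1) (f := b) hL
  have hRN := wnorm_source_le hL hδ hδC hm₄ hC₄ hΘ ha hR eR
  have hA := fun i => transport_energy_le hL (hgγ i) hδ (hs i) i ha (hax i) (hat i)
    (continuous_volt (hm i) hR) (hda i) (ha0 i) (ea i)
  have hV := fun i => wnorm_volt_le_quarter hL hδ hδC (hm i) (hC i) hR
  have hB := counter_energy_le hL hμ hb hbx hbt hR hdb eb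
  have hR1 : wnorm L (-1) R ≤ Real.exp ((δ + 1) * L) * wnorm L δ R :=
    wnorm_le_wnorm hL hR fun x hx => by
      rw [sub_neg_eq_add]; exact mul_le_mul_of_nonneg_left hx.2 (by linarith)
  set P := ∑ i, wnorm L δ (a i) with hP
  have hP0 : 0 ≤ P := Finset.sum_nonneg fun i _ => hN i
  set D := ∑ i, ∫ x in (0 : ℝ)..L, Real.exp (-δ * x) * (2 * a i x * at' i x) with hD
  have h1 : D ≤ -(g * Real.exp (-δ * L) * (a 0 L ^ 2 + a 1 L ^ 2)) - P := by
    have e2 : 0 ≤ g * Real.exp (-δ * L) * a 2 L ^ 2 := by positivity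
    have a0 := hA 0
    have a1 := hA 1
    have a2 := hA 2
    have v0 := hV 0
    have v1 := hV 1
    have v2 := hV 2
    have e3 : (6 * s + 2 + 9 * Θ ^ 2) * P ≤ g * δ * P := mul_le_mul_of_nonneg_right hδg hP0
    have e4 : P = wnorm L δ (a 0) + wnorm L δ (a 1) + wnorm L δ (a 2) := Fin.sum_univ_three _
    have e5 : g * δ * P = g * δ * wnorm L δ (a 0) + g * δ * wnorm L δ (a 1)
      + g * δ * wnorm L δ (a 2) := by rw [e4]; ring
    have e6 : (3 * s + 1) * P = (3 * s + 1) * wnorm L δ (a 0) + (3 * s + 1) * wnorm L δ (a 1)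
      + (3 * s + 1) * wnorm L δ (a 2) := by rw [e4]; ring
    rw [hD, Fin.sum_univ_three]
    linarith
  have h2 : 2 / μ * wnorm L (-1) R ≤ κ / 2 * P := by
    have e1 : 2 / μ * wnorm L (-1) R
        ≤ 2 / μ * (Real.exp ((δ + 1) * L) * (12 * Θ ^ 2 * P)) := by gcongr; exact hR1.trans (by gcongr)
    have e2 : 2 / μ * (Real.exp ((δ + 1) * L) * (12 * Θ ^ 2)) * P ≤ κ / 2 * P :=
      mul_le_mul_of_nonneg_right (by linarith) hP0
    linarith
  have h3 : μ * (Real.exp L * b L ^ 2) ≤ κ * (g * Real.exp (-δ * L)) * (a 0 L ^ 2 + a 1 L ^ 2) := by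
    have e1 : b L ^ 2 ≤ (ρ₁ ^ 2 + ρ₂ ^ 2) * (a 0 L ^ 2 + a 1 L ^ 2) := by
      rw [hbL]; nlinarith [sq_nonneg (ρ₁ * a 1 L - ρ₂ * a 0 L)]
    calc μ * (Real.exp L * b L ^ 2)
        ≤ μ * (Real.exp L * ((ρ₁ ^ 2 + ρ₂ ^ 2) * (a 0 L ^ 2 + a 1 L ^ 2))) := by gcongr
      _ = μ * Real.exp L * (ρ₁ ^ 2 + ρ₂ ^ 2) * (a 0 L ^ 2 + a 1 L ^ 2) := by ring
      _ ≤ _ := mul_le_mul_of_nonneg_right hκ1 (by positivity)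
  have h4 : κ * D ≤ κ * (-(g * Real.exp (-δ * L) * (a 0 L ^ 2 + a 1 L ^ 2)) - P) :=
    mul_le_mul_of_nonneg_left h1 hκ0.le
  have h5 : min (1 / 2) (μ / 2) * (κ * P) ≤ 1 / 2 * (κ * P) :=
    mul_le_mul_of_nonneg_right (min_le_left _ _) (by positivity)
  have h6 : min (1 / 2) (μ / 2) * wnorm L (-1) b ≤ μ / 2 * wnorm L (-1) b :=
    mul_le_mul_of_nonneg_right (min_le_right _ _) hQ
  linarith

/-- Grönwall's inequality in differential form on `[0,∞)`. -/
lemma exp_decay_of_deriv_le {V V' : ℝ → ℝ} {lam : ℝ} (hV : ∀ t, HasDerivAt V (V' t) t)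
    (h : ∀ t, 0 ≤ t → V' t ≤ -lam * V t) {t : ℝ} (ht : 0 ≤ t) :
    V t ≤ Real.exp (-lam * t) * V 0 := by
  have hd : ∀ t, HasDerivAt (fun t => Real.exp (lam * t) * V t)
      (Real.exp (lam * t) * (lam * V t + V' t)) t := fun t => by
    refine ((((hasDerivAt_id t).const_mul lam).exp).mul (hV t)).congr_deriv ?_
    simp; ring
  have hanti : AntitoneOn (fun t => Real.exp (lam * t) * V t) (Ici 0) := by
    refine antitoneOn_of_deriv_nonpos (convex_Ici 0)
      (continuous_iff_continuousAt.2 fun t => (hd t).continuousAt).continuousOn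
      (fun t _ => (hd t).differentiableAt.differentiableWithinAt) fun t ht => ?_
    rw [interior_Ici] at ht
    rw [(hd t).deriv]
    exact mul_nonpos_of_nonneg_of_nonpos (Real.exp_pos _).le (by linarith [h t (le_of_lt ht)])
  have h1 : Real.exp (lam * t) * V t ≤ V 0 := by simpa using hanti self_mem_Ici ht ht
  have h2 := mul_le_mul_of_nonneg_left h1 (Real.exp_pos (-lam * t)).le
  rwa [← mul_assoc, ← Real.exp_add, neg_mul, neg_add_cancel, Real.exp_zero, one_mul,
    ← neg_mul] at h2

end Lyapunov

/-! ### The backstepping transformation -/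

section Transformation

lemma volt_sub_mul {k : ℝ → ℝ → ℝ} (hk : Continuous (Function.uncurry k)) {f g : ℝ → ℝ}
    (hf : Continuous f) (hg : Continuous g) (μ x : ℝ) :
    volt k (fun y => f y - μ * g y) x = volt k f x - μ * volt k g x := by
  unfold volt
  rw [← intervalIntegral.integral_const_mul, ← intervalIntegral.integral_sub]
  · congr 1; funext ξ; ring
  · exact (continuous_kernel_mul hk hf x).intervalIntegrable _ _
  · exact ((continuous_kernel_mul hk hg x).const_mul μ).intervalIntegrable _ _

/-- A linear relation between kernels carries over to the Volterra integrals. -/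
lemma volt_kernel_relation {k₁ k₂ m₄ : ℝ → ℝ → ℝ} {m : Fin 3 → ℝ → ℝ → ℝ}
    (hk₁ : Continuous (Function.uncurry k₁)) (hk₂ : Continuous (Function.uncurry k₂))
    (hm : ∀ i, Continuous (Function.uncurry (m i))) (hm₄ : Continuous (Function.uncurry m₄))
    {f : ℝ → ℝ} (hf : Continuous f) {x c₁ c₂ d₄ : ℝ} {d : Fin 3 → ℝ} (hx : 0 ≤ x)
    (h : ∀ ξ ∈ Icc 0 x, c₁ * k₁ x ξ + c₂ * k₂ x ξ = (∑ j, d j * m j x ξ) + d₄ * m₄ x ξ) :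
    c₁ * volt k₁ f x + c₂ * volt k₂ f x = (∑ j, d j * volt (m j) f x) + d₄ * volt m₄ f x := by
  have i₁ := continuous_kernel_mul hk₁ hf x
  have i₂ := continuous_kernel_mul hk₂ hf x
  have i₃ := fun j => continuous_kernel_mul (hm j) hf x
  have i₄ := continuous_kernel_mul hm₄ hf x
  unfold volt
  simp only [← intervalIntegral.integral_const_mul]
  rw [← intervalIntegral.integral_finsetSum
      fun j _ => Continuous.intervalIntegrable ((i₃ j).const_mul (d j)) _ _,
    ← intervalIntegral.integral_add, ← intervalIntegral.integral_add]
  · refine intervalIntegral.integral_congr fun ξ hξ => ?_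
    rw [uIcc_of_le hx] at hξ
    have e := congrArg (· * f ξ) (h ξ hξ)
    simp only [Fin.sum_univ_three] at e ⊢
    linarith
  all_goals exact Continuous.intervalIntegrable (by fun_prop) _ _

/-- The transformed variable `f - V_k b` is differentiable in space. -/
lemma hasDerivAt_sub_volt {k : ℝ → ℝ → ℝ} (hk : ContDiff ℝ 1 (Function.uncurry k))
    {f f' b F : ℝ → ℝ} (hf : ∀ x, HasDerivAt f (f' x) x) (hb : Continuous b) {L : ℝ}
    (e : ∀ x ∈ Icc 0 L, F x = f x - volt k b x) {x : ℝ} (hx : x ∈ Ioo 0 L) :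
    HasDerivAt F (f' x - (k x x * b x + volt (fun x ξ => deriv (fun y => k y ξ) x) b x)) x := by
  have h := (hf x).sub (hasDerivAt_volt hk.continuous (continuous_deriv_fst hk)
    (fun x ξ => hasDerivAt_fst hk x ξ) hb x)
  refine h.congr_of_eventuallyEq ?_
  filter_upwards [Icc_mem_nhds hx.1 hx.2] with y hy using e y hy

variable {L μ : ℝ} {m : Fin 3 → ℝ → ℝ → ℝ} {m₄ : ℝ → ℝ → ℝ}

/-- Under the kernel equation for `m₄`, the source `R = ∂ₜb - μ ∂ₓb` of the transformed equation
solves a Volterra equation driven by the transport components `uⱼ - V_{mⱼ} b`. -/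
lemma target_source {θ : Fin 3 → ℝ → ℝ} (hm : ∀ i, Continuous (Function.uncurry (m i)))
    (hm₄ : ContDiff ℝ 1 (Function.uncurry m₄))
    {x : ℝ} (hx : x ∈ Icc 0 L)
    (hpde : ∀ ξ ∈ Icc 0 x, μ * deriv (fun y => m₄ y ξ) x + μ * deriv (fun s => m₄ x s) ξ
        = - ∑ j, θ j x * m j x ξ)
    {b bx bt wx wt : ℝ → ℝ} {u : Fin 3 → ℝ}
    (hb : Continuous b) (hbx : Continuous bx) (hbt : Continuous bt)
    (hdb : ∀ x ∈ Ioo 0 L, HasDerivAt b (bx x) x)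
    (hbt' : bt x + volt m₄ bt x = wt x)
    (hbx' : bx x = wx x - (m₄ x x * b x + volt (fun x ξ => deriv (fun y => m₄ y ξ) x) b x))
    (hw : wt x - μ * wx x = (∑ j, θ j x * u j) + (-μ * m₄ x 0) * b 0) :
    (bt x - μ * bx x) + volt m₄ (fun y => bt y - μ * bx y) x
      = ∑ j, θ j x * (u j - volt (m j) b x) := by
  have h1 := volt_kernel_relation (f := b) (d := fun j => -θ j x) (d₄ := 0) (c₁ := μ) (c₂ := μ)
    (continuous_deriv_fst hm₄) (continuous_deriv_snd hm₄) hm hm₄.continuous hb hx.1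
    fun ξ hξ => by
      rw [hpde ξ hξ]; simp only [Fin.sum_univ_three]; ring
  have h2 := volt_deriv hm₄.continuous (continuous_deriv_snd hm₄)
    (fun x ξ => hasDerivAt_snd hm₄ x ξ) hb hbx hdb hx
  rw [volt_sub_mul hm₄.continuous hbt hbx, h2, hbx']
  simp only [Fin.sum_univ_three] at h1 hw ⊢
  linarith

/-- Under the kernel equation for `mᵢ` and its diagonal condition, `aᵢ = uᵢ - V_{mᵢ} b` satisfies a
transport equation from which the counter-propagating variable has disappeared, except through the
source `R = ∂ₜb - μ ∂ₓb`. -/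
lemma target_transport {i : Fin 3} {γ α : ℝ} {σ : Fin 3 → ℝ}
    (hγμ : γ + μ ≠ 0)
    (hm : ∀ i, ContDiff ℝ 1 (Function.uncurry (m i))) (hm₄ : Continuous (Function.uncurry m₄))
    {x : ℝ} (hx : x ∈ Icc 0 L)
    (hpde : ∀ ξ ∈ Icc 0 x, γ * deriv (fun y => m i y ξ) x - μ * deriv (fun s => m i x s) ξ
        = (∑ j, σ j * m j x ξ) + α * m₄ x ξ)
    (hdiag : m i x x = α / (γ + μ))
    {b bx bt : ℝ → ℝ} {u : Fin 3 → ℝ} {ux ut w : ℝ}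
    (hb : Continuous b) (hbx : Continuous bx) (hbt : Continuous bt)
    (hdb : ∀ x ∈ Ioo 0 L, HasDerivAt b (bx x) x)
    (hw : b x + volt m₄ b x = w)
    (hu : ut + γ * ux = (∑ j, σ j * u j) + α * w + (-μ * m i x 0) * b 0) :
    (ut - volt (m i) bt x)
        + γ * (ux - (m i x x * b x + volt (fun x ξ => deriv (fun y => m i y ξ) x) b x))
      = (∑ j, σ j * (u j - volt (m j) b x)) - volt (m i) (fun y => bt y - μ * bx y) x := by
  have h1 := volt_kernel_relation (f := b) (d := σ) (d₄ := α) (c₁ := γ) (c₂ := -μ)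
    (continuous_deriv_fst (hm i)) (continuous_deriv_snd (hm i)) (fun i => (hm i).continuous) hm₄ hb
    hx.1 fun ξ hξ => by rw [← hpde ξ hξ]; ring
  have h2 := volt_deriv (hm i).continuous (continuous_deriv_snd (hm i))
    (fun x ξ => hasDerivAt_snd (hm i) x ξ) hb hbx hdb hx
  have h3 : (γ + μ) * m i x x = α := by rw [hdiag]; field_simp
  have h4 : (γ + μ) * m i x x * b x = α * b x := by rw [h3]
  have h5 : α * w = α * b x + α * volt m₄ b x := by rw [← hw]; ring
  rw [volt_sub_mul (hm i).continuous hbt hbx, h2]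
  simp only [Fin.sum_univ_three] at h1 hu ⊢
  linarith

end Transformation

/-! ### Equivalence of the energies -/

section Equivalence

variable {L δ C κ : ℝ} {m : Fin 3 → ℝ → ℝ → ℝ} {m₄ : ℝ → ℝ → ℝ}

/-- The Lyapunov functional is bounded by the weighted energy of the original variables, and
conversely. -/
lemma lyapunov_equiv (hL : 0 ≤ L) (hδ : 0 < δ) (hδC : 4 * C ^ 2 * L ≤ δ) (hκ : 1 ≤ κ)
    (hm : ∀ i, Continuous (Function.uncurry (m i))) (hm₄ : Continuous (Function.uncurry m₄))
    (hC : ∀ i, ∀ x ∈ Icc 0 L, ∀ ξ ∈ Icc 0 L, |m i x ξ| ≤ C)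
    (hC₄ : ∀ x ∈ Icc 0 L, ∀ ξ ∈ Icc 0 L, |m₄ x ξ| ≤ C)
    {u a : Fin 3 → ℝ → ℝ} {w b : ℝ → ℝ} (hu : ∀ i, Continuous (u i)) (ha : ∀ i, Continuous (a i))
    (hw : Continuous w) (hb : Continuous b)
    (ea : ∀ i, ∀ x ∈ Icc 0 L, a i x = u i x - volt (m i) b x)
    (eb : ∀ x ∈ Icc 0 L, b x + volt m₄ b x = w x) :
    κ * (∑ i, wnorm L δ (a i)) + wnorm L (-1) b
        ≤ (6 * κ + 4 * Real.exp ((δ + 1) * L)) * ((∑ i, wnorm L δ (u i)) + wnorm L δ w) ∧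
      (∑ i, wnorm L δ (u i)) + wnorm L δ w
        ≤ 5 * (κ * (∑ i, wnorm L δ (a i)) + wnorm L (-1) b) := by
  have hbw := wnorm_le_of_volterra hL hδ hδC hm₄ hC₄ hb hw eb
  have hv := fun i => wnorm_volt_le_quarter hL hδ hδC (hm i) (hC i) hb
  have hv₄ := wnorm_volt_le_quarter hL hδ hδC hm₄ hC₄ hb
  have hau := fun i => wnorm_le_two (δ := δ) hL (hu i) (continuous_volt (hm i) hb) (ha i)
    fun x hx => Or.inr (ea i x hx)
  have hua := fun i => wnorm_le_two (δ := δ) hL (ha i) (continuous_volt (hm i) hb) (hu i)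
    fun x hx => Or.inl (by linarith [ea i x hx])
  have hwb := wnorm_le_two (δ := δ) hL hb (continuous_volt hm₄ hb) hw
    fun x hx => Or.inl (eb x hx).symm
  have hQ : wnorm L (-1) b ≤ Real.exp ((δ + 1) * L) * wnorm L δ b :=
    wnorm_le_wnorm hL hb fun x hx => by
      rw [sub_neg_eq_add]; exact mul_le_mul_of_nonneg_left hx.2 (by linarith)
  have hQ' : wnorm L δ b ≤ wnorm L (-1) b := by
    have := wnorm_le_wnorm (δ := -1) (δ' := δ) (c := 0) hL hb fun x hx =>
      mul_nonpos_of_nonpos_of_nonneg (by linarith) hx.1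
    simpa using this
  have hN := fun i => wnorm_nonneg (δ := δ) (f := a i) hL
  have hNu := fun i => wnorm_nonneg (δ := δ) (f := u i) hL
  have hNb := wnorm_nonneg (δ := δ) (f := b) hL
  have hNw := wnorm_nonneg (δ := δ) (f := w) hL
  set E := Real.exp ((δ + 1) * L)
  have hE : 0 < E := Real.exp_pos _
  set P := ∑ i, wnorm L δ (a i) with hP
  set U := ∑ i, wnorm L δ (u i) with hU
  have hP0 : 0 ≤ P := Finset.sum_nonneg fun i _ => hN i
  have hU0 : 0 ≤ U := Finset.sum_nonneg fun i _ => hNu i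
  have h1 : P ≤ 2 * U + 6 * wnorm L δ w := by
    rw [hP, hU, Fin.sum_univ_three, Fin.sum_univ_three]
    linarith [hau 0, hau 1, hau 2, hv 0, hv 1, hv 2]
  have h2 : U ≤ 2 * P + 3 / 2 * wnorm L δ b := by
    rw [hP, hU, Fin.sum_univ_three, Fin.sum_univ_three]
    linarith [hua 0, hua 1, hua 2, hv 0, hv 1, hv 2]
  constructor
  · have h3 : κ * P ≤ κ * (2 * U + 6 * wnorm L δ w) := mul_le_mul_of_nonneg_left h1 (by linarith)
    have h4 : E * wnorm L δ b ≤ E * (4 * wnorm L δ w) := mul_le_mul_of_nonneg_left hbw hE.le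
    have h5 : 0 ≤ E * U := by positivity
    have h6 : 0 ≤ κ * U := mul_nonneg (by linarith) hU0
    nlinarith
  · have h3 : P ≤ κ * P := le_mul_of_one_le_left hP0 hκ
    linarith

lemma wnorm_le_integral (hL : 0 ≤ L) (hδ : 0 ≤ δ) {f : ℝ → ℝ} (hf : Continuous f) :
    wnorm L δ f ≤ ∫ x in (0 : ℝ)..L, f x ^ 2 := by
  have := wnorm_le_wnorm (δ := 0) (δ' := δ) (c := 0) hL hf fun x hx =>
    mul_nonpos_of_nonpos_of_nonneg (by linarith) hx.1
  simpa [wnorm] using this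

lemma integral_le_wnorm (hL : 0 ≤ L) (hδ : 0 ≤ δ) {f : ℝ → ℝ} (hf : Continuous f) :
    ∫ x in (0 : ℝ)..L, f x ^ 2 ≤ Real.exp (δ * L) * wnorm L δ f := by
  have := wnorm_le_wnorm (δ := δ) (δ' := 0) (c := δ * L) hL hf fun x hx => by
    rw [sub_zero]; exact mul_le_mul_of_nonneg_left hx.2 hδ
  simpa [wnorm] using this

end Equivalence

end ObserverError

/-! ### Exponential convergence -/

open ObserverError in
/- STATEMENT 1: The observer error system with output-injection gains
p_i(x) = −μ m_i(x,0) converges exponentially to zero in the L² sense. -/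

theorem observer_error_exponential_convergence
    (L : ℝ) (hL : 0 < L)
    (γ : Fin 3 → ℝ) (hγ : ∀ i, 0 < γ i)
    (μ : ℝ) (hμ : 0 < μ)
    (σ : Fin 3 → Fin 3 → ℝ) (ρ₁ ρ₂ : ℝ)
    (α θ : Fin 3 → ℝ → ℝ)
    (hα : ∀ i, ContinuousOn (α i) (Set.Icc 0 L))
    (hθ : ∀ i, ContinuousOn (θ i) (Set.Icc 0 L))
    -- observer kernels m₁,m₂,m₃,m₄ on the triangle T = {0 ≤ ξ ≤ x ≤ L}
    (m : Fin 3 → ℝ → ℝ → ℝ) (m₄ : ℝ → ℝ → ℝ)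
    (hmC1 : ∀ i, ContDiff ℝ 1 (Function.uncurry (m i)))
    (hm₄C1 : ContDiff ℝ 1 (Function.uncurry m₄))
    (hmpde : ∀ i, ∀ x ξ : ℝ, 0 ≤ ξ → ξ ≤ x → x ≤ L →
      γ i * deriv (fun y => m i y ξ) x - μ * deriv (fun s => m i x s) ξ
        = (∑ j, σ i j * m j x ξ) + α i x * m₄ x ξ)
    (hm₄pde : ∀ x ξ : ℝ, 0 ≤ ξ → ξ ≤ x → x ≤ L →
      μ * deriv (fun y => m₄ y ξ) x + μ * deriv (fun s => m₄ x s) ξ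
        = - ∑ j, θ j x * m j x ξ)
    (hmdiag : ∀ i, ∀ x : ℝ, 0 ≤ x → x ≤ L → m i x x = α i x / (γ i + μ))
    (hm₄bc : ∀ ξ : ℝ, 0 ≤ ξ → ξ ≤ L → m₄ L ξ = ρ₁ * m 0 L ξ + ρ₂ * m 1 L ξ) :
    ∃ M > (0:ℝ), ∃ lam > (0:ℝ),
      ∀ (tu : Fin 3 → ℝ → ℝ → ℝ) (tw : ℝ → ℝ → ℝ),
        (∀ i, ContDiff ℝ 1 (Function.uncurry (tu i))) →
        ContDiff ℝ 1 (Function.uncurry tw) →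
        -- interior equations of the error system, with p_i(x) = −μ m_i(x,0)
        (∀ i, ∀ t x : ℝ, 0 ≤ t → 0 ≤ x → x ≤ L →
          deriv (fun τ => tu i τ x) t + γ i * deriv (fun y => tu i t y) x
            = (∑ j, σ i j * tu j t x) + α i x * tw t x
              + (-μ * m i x 0) * tw t 0) →
        (∀ t x : ℝ, 0 ≤ t → 0 ≤ x → x ≤ L →
          deriv (fun τ => tw τ x) t - μ * deriv (fun y => tw t y) x
            = (∑ j, θ j x * tu j t x) + (-μ * m₄ x 0) * tw t 0) →
        -- boundary conditions
        (∀ i, ∀ t : ℝ, 0 ≤ t → tu i t 0 = 0) →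
        (∀ t : ℝ, 0 ≤ t → tw t L = ρ₁ * tu 0 t L + ρ₂ * tu 1 t L) →
        ∀ t : ℝ, 0 ≤ t →
          (∑ i, ∫ x in (0:ℝ)..L, (tu i t x) ^ 2) + (∫ x in (0:ℝ)..L, (tw t x) ^ 2)
            ≤ M * Real.exp (-lam * t) *
              ((∑ i, ∫ x in (0:ℝ)..L, (tu i 0 x) ^ 2)
                + (∫ x in (0:ℝ)..L, (tw 0 x) ^ 2)) := by
  have hL0 : 0 ≤ L := hL.le
  have hmc : ∀ i, Continuous (Function.uncurry (m i)) := fun i => (hmC1 i).continuous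
  have hm₄c := hm₄C1.continuous
  obtain ⟨C, hC, hC₄⟩ : ∃ C, (∀ i, ∀ x ∈ Icc 0 L, ∀ ξ ∈ Icc 0 L, |m i x ξ| ≤ C) ∧
      ∀ x ∈ Icc 0 L, ∀ ξ ∈ Icc 0 L, |m₄ x ξ| ≤ C := by
    choose c hc0 hc using fun i => exists_bound_square (hmc i) L
    obtain ⟨c₄, hc₄0, hc₄⟩ := exists_bound_square hm₄c L
    refine ⟨(∑ i, c i) + c₄, fun i x hx ξ hξ => (hc i x hx ξ hξ).trans ?_,
      fun x hx ξ hξ => (hc₄ x hx ξ hξ).trans ?_⟩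
    · linarith [Finset.single_le_sum (fun j _ => hc0 j) (Finset.mem_univ i)]
    · linarith [Finset.sum_nonneg fun j (_ : j ∈ Finset.univ) => hc0 j]
  obtain ⟨Θ, hΘ⟩ : ∃ Θ, ∀ j, ∀ x ∈ Icc 0 L, |θ j x| ≤ Θ := by
    choose c hc using fun j => isCompact_Icc.exists_bound_of_continuousOn (hθ j)
    refine ⟨∑ j, |c j|, fun j x hx => ((hc j x hx).trans (le_abs_self _)).trans ?_⟩
    exact Finset.single_le_sum (fun j _ => abs_nonneg (c j)) (Finset.mem_univ j)
  obtain ⟨s, hs0, hs⟩ : ∃ s, 0 ≤ s ∧ ∀ i j, |σ i j| ≤ s := by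
    refine ⟨∑ i, ∑ j, |σ i j|, Finset.sum_nonneg fun i _ => Finset.sum_nonneg fun j _ =>
      abs_nonneg _, fun i j => ?_⟩
    exact (Finset.single_le_sum (fun j _ => abs_nonneg (σ i j)) (Finset.mem_univ j)).trans
      (Finset.single_le_sum (f := fun i => ∑ j, |σ i j|)
        (fun i _ => Finset.sum_nonneg fun j _ => abs_nonneg _) (Finset.mem_univ i))
  obtain ⟨i₀, hi₀⟩ := Finite.exists_min γ
  set g := γ i₀ with hg_def
  have hg : 0 < g := hγ i₀
  -- `δ` makes the Volterra operators contractive in the weighted norm and absorbs the couplings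
  obtain ⟨δ, hδ, hδC, hδg⟩ : ∃ δ, 0 < δ ∧ 4 * C ^ 2 * L ≤ δ ∧ 6 * s + 2 + 9 * Θ ^ 2 ≤ g * δ := by
    have h1 : 0 ≤ 4 * C ^ 2 * L := by positivity
    have h2 : 0 < (6 * s + 2 + 9 * Θ ^ 2) / g := by positivity
    refine ⟨4 * C ^ 2 * L + (6 * s + 2 + 9 * Θ ^ 2) / g, by linarith, by linarith, ?_⟩
    rw [mul_add, mul_div_cancel₀ _ hg.ne']
    linarith [mul_nonneg hg.le h1]
  -- `κ` absorbs the boundary value `b(t,L)` and the source `R` of the equation for `b`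
  obtain ⟨κ, hκ, hκ1, hκ2⟩ : ∃ κ, 1 ≤ κ ∧
      μ * Real.exp L * (ρ₁ ^ 2 + ρ₂ ^ 2) ≤ κ * (g * Real.exp (-δ * L)) ∧
      2 * (2 / μ * (Real.exp ((δ + 1) * L) * (12 * Θ ^ 2))) ≤ κ := by
    have h0 : 0 < g * Real.exp (-δ * L) := by positivity
    have h1 : 0 ≤ μ * Real.exp L * (ρ₁ ^ 2 + ρ₂ ^ 2) / (g * Real.exp (-δ * L)) := by positivity
    have h2 : 0 ≤ 2 * (2 / μ * (Real.exp ((δ + 1) * L) * (12 * Θ ^ 2))) := by positivity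
    refine ⟨1 + μ * Real.exp L * (ρ₁ ^ 2 + ρ₂ ^ 2) / (g * Real.exp (-δ * L))
      + 2 * (2 / μ * (Real.exp ((δ + 1) * L) * (12 * Θ ^ 2))), by linarith, ?_, by linarith⟩
    rw [← div_le_iff₀ h0]
    linarith
  have hκ0 : 0 < κ := by linarith
  refine ⟨Real.exp (δ * L) * (5 * (6 * κ + 4 * Real.exp ((δ + 1) * L))), by positivity,
    min (1 / 2) (μ / 2), by positivity, ?_⟩
  intro tu tw htu htw hpu hpw hbu hbw t ht
  have htuc := fun i => (htu i).continuous
  have htwc := htw.continuous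
  -- the transformed variables as C¹ curves in `C([0,L])`
  have hW := hasDerivAt_curveX (L := L) htwc (continuous_deriv_fst htw)
    (fun t x => hasDerivAt_fst htw t x)
  have hU := fun i => hasDerivAt_curveX (L := L) (htuc i) (continuous_deriv_fst (htu i))
    (fun t x => hasDerivAt_fst (htu i) t x)
  obtain ⟨b, bt, hb, hbW, hbtW⟩ := exists_volterra_curve hL0 hm₄c hW
  let A : Fin 3 → ℝ → C(Icc (0 : ℝ) L, ℝ) := fun i t =>
    curveX L (tu i) (htuc i) t - voltX hL0 (m i) (hmc i) (b t)
  let At : Fin 3 → ℝ → C(Icc (0 : ℝ) L, ℝ) := fun i t =>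
    curveX L _ (continuous_deriv_fst (htu i)) t - voltX hL0 (m i) (hmc i) (bt t)
  have hA : ∀ i t, HasDerivAt (A i) (At i t) t := fun i t =>
    (hU i t).sub ((voltX hL0 (m i) (hmc i)).hasFDerivAt.comp_hasDerivAt t (hb t))
  have hbx : ∀ t, ∀ x ∈ Icc 0 L, ext hL0 (b t) x + volt m₄ (ext hL0 (b t)) x = tw t x := by
    intro t x hx
    rw [ext_apply hL0 _ hx]
    exact congrArg (fun f : C(Icc (0 : ℝ) L, ℝ) => f ⟨x, hx⟩) (hbW t)
  have hbtx : ∀ t, ∀ x ∈ Icc 0 L, ext hL0 (bt t) x + volt m₄ (ext hL0 (bt t)) x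
      = deriv (fun τ => tw τ x) t := by
    intro t x hx
    rw [ext_apply hL0 _ hx]
    exact congrArg (fun f : C(Icc (0 : ℝ) L, ℝ) => f ⟨x, hx⟩) (hbtW t)
  have hAx : ∀ i t, ∀ x ∈ Icc 0 L,
      ext hL0 (A i t) x = tu i t x - volt (m i) (ext hL0 (b t)) x := by
    intro i t x hx
    rw [ext_apply hL0 _ hx]; rfl
  have hAtx : ∀ i t, ∀ x ∈ Icc 0 L,
      ext hL0 (At i t) x
        = deriv (fun τ => tu i τ x) t - volt (m i) (ext hL0 (bt t)) x := by
    intro i t x hx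
    rw [ext_apply hL0 _ hx]; rfl
  have hVd : ∀ t, HasDerivAt
      (fun t => κ * (∑ i, wnorm L δ (ext hL0 (A i t))) + wnorm L (-1) (ext hL0 (b t)))
      (κ * (∑ i, ∫ x in (0 : ℝ)..L,
          Real.exp (-δ * x) * (2 * ext hL0 (A i t) x * ext hL0 (At i t) x))
        + ∫ x in (0 : ℝ)..L,
          Real.exp (-(-1) * x) * (2 * ext hL0 (b t) x * ext hL0 (bt t) x)) t := fun t =>
    ((HasDerivAt.fun_sum fun i _ => hasDerivAt_wnorm hL0 (hA i t)).const_mul κ).add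
      (hasDerivAt_wnorm hL0 (hb t))
  have hdiss : ∀ t, 0 ≤ t →
      κ * (∑ i, ∫ x in (0 : ℝ)..L,
          Real.exp (-δ * x) * (2 * ext hL0 (A i t) x * ext hL0 (At i t) x))
        + ∫ x in (0 : ℝ)..L,
          Real.exp (-(-1) * x) * (2 * ext hL0 (b t) x * ext hL0 (bt t) x)
      ≤ -min (1 / 2) (μ / 2)
        * (κ * (∑ i, wnorm L δ (ext hL0 (A i t))) + wnorm L (-1) (ext hL0 (b t))) := by
    intro t ht
    have cb := continuous_ext hL0 (b t)
    have cbt := continuous_ext hL0 (bt t)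
    have hmem0 : (0 : ℝ) ∈ Icc 0 L := ⟨le_rfl, hL0⟩
    have hmemL : L ∈ Icc 0 L := ⟨hL0, le_rfl⟩
    have hdiagc : ∀ {k : ℝ → ℝ → ℝ}, Continuous (Function.uncurry k) →
        Continuous fun x => k x x := fun {k} hk => by
      have : Continuous fun x : ℝ => Function.uncurry k (x, x) := by fun_prop
      exact this
    -- the spatial derivatives of `b` and `aᵢ`
    let bx : ℝ → ℝ := fun x => deriv (fun y => tw t y) x - (m₄ x x * ext hL0 (b t) x
      + volt (fun x ξ => deriv (fun y => m₄ y ξ) x) (ext hL0 (b t)) x)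
    let ax : Fin 3 → ℝ → ℝ := fun i x => deriv (fun y => tu i t y) x
      - (m i x x * ext hL0 (b t) x
        + volt (fun x ξ => deriv (fun y => m i y ξ) x) (ext hL0 (b t)) x)
    have cbx : Continuous bx :=
      ((continuous_deriv_snd htw).comp (Continuous.prodMk_right t)).sub
        (((hdiagc hm₄c).mul cb).add (continuous_volt (continuous_deriv_fst hm₄C1) cb))
    have cax : ∀ i, Continuous (ax i) := fun i =>
      ((continuous_deriv_snd (htu i)).comp (Continuous.prodMk_right t)).sub
        (((hdiagc (hmc i)).mul cb).add (continuous_volt (continuous_deriv_fst (hmC1 i)) cb))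
    have hdb : ∀ x ∈ Ioo 0 L, HasDerivAt (ext hL0 (b t)) (bx x) x := fun x hx =>
      hasDerivAt_sub_volt hm₄C1 (fun x => hasDerivAt_snd htw t x) cb
        (fun y hy => by linarith [hbx t y hy]) hx
    have hda : ∀ i, ∀ x ∈ Ioo 0 L, HasDerivAt (ext hL0 (A i t)) (ax i x) x := fun i x hx =>
      hasDerivAt_sub_volt (hmC1 i) (fun x => hasDerivAt_snd (htu i) t x) cb (hAx i t) hx
    have hb0 : ext hL0 (b t) 0 = tw t 0 := by
      have := hbx t 0 hmem0
      simpa [volt] using this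
    refine lyapunov_dissipation (R := fun x => ext hL0 (bt t) x - μ * bx x) hL0 hg hi₀ hμ hδ hδC
      hs hδg hκ0 hκ1 hκ2 hmc hm₄c hC hC₄ hΘ (fun i => continuous_ext hL0 _) cax
      (fun i => continuous_ext hL0 _) cb cbx cbt (cbt.sub (cbx.const_mul μ)) hda hdb ?_ ?_ ?_ ?_ ?_
    · intro i x hx
      rw [hAtx i t x hx]
      simp only [hAx _ t x hx]
      exact target_transport (by linarith [hγ i]) hmC1 hm₄c hx
        (fun ξ hξ => hmpde i x ξ hξ.1 hξ.2 hx.2) (hmdiag i x hx.1 hx.2) cb cbx cbt hdb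
        (hbx t x hx) (by rw [hb0]; exact hpu i t x ht hx.1 hx.2)
    · intro x _
      ring
    · intro x hx
      simp only [hAx _ t x hx]
      exact target_source (wt := fun x => deriv (fun τ => tw τ x) t)
        (wx := fun x => deriv (fun y => tw t y) x) (u := fun j => tu j t x) hmc hm₄C1 hx (fun ξ hξ => hm₄pde x ξ hξ.1 hξ.2 hx.2) cb cbx cbt hdb
        (hbtx t x hx) rfl (by rw [hb0]; exact hpw t x ht hx.1 hx.2)
    · intro i
      rw [hAx i t 0 hmem0, hbu i t ht]
      simp [volt]
    · have h1 := hbx t L hmemL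
      rw [hbw t ht] at h1
      -- `m₄(L,·) = ρ₁ m₁(L,·) + ρ₂ m₂(L,·)` cancels the integral terms at `x = L`
      have h2 := volt_kernel_relation (f := ext hL0 (b t)) (x := L) (c₁ := ρ₁) (c₂ := ρ₂)
        (d := 0) (d₄ := 1) (hmc 0) (hmc 1) hmc hm₄c cb hL0
        fun ξ hξ => by simp [hm₄bc ξ hξ.1 hξ.2]
      simp at h2
      rw [hAx 0 t L hmemL, hAx 1 t L hmemL]
      linarith
  have hdecay := exp_decay_of_deriv_le hVd hdiss ht
  have hequiv := fun t => lyapunov_equiv (u := fun i => tu i t) (a := fun i => ext hL0 (A i t))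
    (w := tw t) (b := ext hL0 (b t)) hL0 hδ hδC hκ hmc hm₄c hC hC₄
    (fun i => (htuc i).comp (Continuous.prodMk_right t)) (fun i => continuous_ext hL0 _)
    (htwc.comp (Continuous.prodMk_right t)) (continuous_ext hL0 _) (fun i => hAx i t) (hbx t)
  have cu : ∀ i t, Continuous (tu i t) := fun i t => (htuc i).comp (Continuous.prodMk_right t)
  have cw : ∀ t, Continuous (tw t) := fun t => htwc.comp (Continuous.prodMk_right t)
  -- back to the unweighted L² energies
  have h1 : (∑ i, ∫ x in (0 : ℝ)..L, (tu i t x) ^ 2) + (∫ x in (0 : ℝ)..L, (tw t x) ^ 2)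
      ≤ Real.exp (δ * L) * ((∑ i, wnorm L δ (tu i t)) + wnorm L δ (tw t)) := by
    rw [mul_add, Finset.mul_sum]
    exact add_le_add (Finset.sum_le_sum fun i _ => integral_le_wnorm hL0 hδ.le (cu i t))
      (integral_le_wnorm hL0 hδ.le (cw t))
  have h2 : (∑ i, wnorm L δ (tu i 0)) + wnorm L δ (tw 0)
      ≤ (∑ i, ∫ x in (0 : ℝ)..L, (tu i 0 x) ^ 2) + (∫ x in (0 : ℝ)..L, (tw 0 x) ^ 2) :=
    add_le_add (Finset.sum_le_sum fun i _ => wnorm_le_integral hL0 hδ.le (cu i 0))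
      (wnorm_le_integral hL0 hδ.le (cw 0))
  set K := 6 * κ + 4 * Real.exp ((δ + 1) * L) with hK
  have hK0 : 0 ≤ K := by positivity
  calc _ ≤ _ := h1
    _ ≤ Real.exp (δ * L) * (5 * (Real.exp (-min (1 / 2) (μ / 2) * t) * (K *
        ((∑ i, ∫ x in (0 : ℝ)..L, (tu i 0 x) ^ 2) + (∫ x in (0 : ℝ)..L, (tw 0 x) ^ 2))))) := by
      refine mul_le_mul_of_nonneg_left ((hequiv t).2.trans ?_) (Real.exp_pos _).le
      refine mul_le_mul_of_nonneg_left (hdecay.trans ?_) (by norm_num)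
      refine mul_le_mul_of_nonneg_left ((hequiv 0).1.trans ?_) (Real.exp_pos _).le
      exact mul_le_mul_of_nonneg_left h2 hK0
    _ = _ := by ring
end
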